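/- Let 1 < p < ∞ and let r, s, R, S ∈ ℝ satisfy r > −1/p, s < 1 − 1/p, R < 1 − 1/p, S > −1/p, r ≥ R and s ≤ S. Then there exists a constant C, independent of f, such that for every measurable f : ℝ → ℂ with ∫_{−∞}^{∞} (|f(y)| · |y|^R (1+|y|)^{S−R})^p dy < ∞, the principal value Hf(x) = lim_{ε→0⁺} ∫_{|x−y|>ε} f(y)/(x−y) dy exists for almost every x ∈ ℝ and ∫_{−∞}^{∞} (|Hf(x)| · |x|^r (1+|x|)^{s−r})^p dx ≤ C ∫_{−∞}^{∞} (|f(y)| · |y|^R (1+|y|)^{S−R})^p dy. -/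

import Mathlib

/-!
The weights are monotone in their exponents (`wt_le`), and the hypotheses leave room for exponents
`a ∈ [R, r]` and `b ∈ [s, S]` with `-1/p < a, b < 1 - 1/p`. The two-weight inequality therefore
follows from the one-weight inequality for `w(x) = |x|^a (1+|x|)^(b-a)`.

Write `g = f w ∈ L^p`. Then `w(x) f(y) / (x - y) = g(y) / (x - y) - D(x, y) g(y)` with the commutator
kernel `D(x, y) = (1 - w(x) / w(y)) / (x - y)`. The ratio `w(x) / w(y)` lies between `|x/y|^a` and
`|x/y|^b` (`wt_ratio`), so `D` is dominated by the homogeneous kernels `||x/y|^c - 1| / |x - y|` with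
`c = a, b`. These are positive and of degree `-1`, and Minkowski's inequality bounds them on `L^p`
in the range of exponents above (`Kw_bound`). The integrals of `D(x, y) g(y)` thus converge
absolutely for almost every `x`, and existence of the principal value as well as the norm inequality
(`weighted`) are reduced to the case without weight.

The unweighted theorem (`hilbert_complex`) is proved by complex methods. For `f ≥ 0` bounded with
compact support, the Cauchy integral `F` of `f` has positive real part (a Poisson integral) and its
imaginary part is the conjugate Poisson integral. For `1 < p ≤ 2`, Calderón's inequality
`|w|^p ≤ A (Re w)^p - B Re (w^p)` on the right half-plane, combined with `∫ F^p = 0` on horizontal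
lines, gives a bound for `F` in `L^p` uniform in the height. Duality gives `p > 2` (`riesz`). Passing
to the limit for Lipschitz functions with compact support and extending by density, one gets for
every `f ∈ L^p` a function `h ∈ L^p` whose Poisson integral is the conjugate Poisson integral of `f`
(`exists_conj`). By Lebesgue's differentiation theorem the latter converges to `h` almost everywhere.
Since the truncated kernel differs from the conjugate Poisson kernel by at most the Poisson kernel
(`abs_tk_sub_qk`), the truncated integrals converge to the same limit.
-/

open MeasureTheory Filter Set

namespace HilbertW

/-! ### Minkowski's inequality and the Poisson kernels -/

/-- Minkowski's integral inequality in the form used here: Hölder's inequality for the measure `k du`,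
followed by Tonelli's theorem. -/
theorem lintegral_mink {p : ℝ} (hp : 1 < p) (k : ℝ → ENNReal) (hk : Measurable k)
    (G : ℝ → ℝ → ENNReal) (hG : Measurable (Function.uncurry G)) :
    ∫⁻ x, (∫⁻ u, k u * G x u) ^ p ≤
      (∫⁻ u, k u) ^ (p - 1) * ∫⁻ u, k u * ∫⁻ x, (G x u) ^ p := by
  have hp0 : 0 < p := by linarith
  have hpq : p.HolderConjugate (p / (p - 1)) := Real.HolderConjugate.conjExponent hp
  have hGx : ∀ x, Measurable (G x) := fun x => hG.comp measurable_prodMk_left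
  have key : ∀ x, (∫⁻ u, k u * G x u) ^ p ≤ (∫⁻ u, k u) ^ (p - 1) * ∫⁻ u, k u * (G x u) ^ p := by
    intro x
    have h := ENNReal.lintegral_mul_le_Lp_mul_Lq (volume.withDensity k) hpq
      (hGx x).aemeasurable (g := fun _ => 1) aemeasurable_const
    simp only [Pi.mul_apply, mul_one, ENNReal.one_rpow] at h
    rw [lintegral_withDensity_eq_lintegral_mul _ hk (hGx x),
      lintegral_withDensity_eq_lintegral_mul _ hk ((hGx x).pow_const p),
      lintegral_withDensity_eq_lintegral_mul _ hk measurable_const] at h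
    simp only [Pi.mul_apply, mul_one] at h
    calc _ ≤ _ := ENNReal.rpow_le_rpow h hp0.le
      _ = _ := by
        rw [ENNReal.mul_rpow_of_nonneg _ _ hp0.le, ← ENNReal.rpow_mul, ← ENNReal.rpow_mul,
          one_div_mul_cancel hp0.ne', ENNReal.rpow_one, mul_comm]
        congr 2
        field_simp
  calc _ ≤ ∫⁻ x, (∫⁻ u, k u) ^ (p - 1) * ∫⁻ u, k u * (G x u) ^ p := lintegral_mono key
    _ = (∫⁻ u, k u) ^ (p - 1) * ∫⁻ x, ∫⁻ u, k u * (G x u) ^ p := by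
        rw [lintegral_const_mul]
        exact Measurable.lintegral_prod_right' (f := fun z : ℝ × ℝ => k z.2 * (G z.1 z.2) ^ p) <|
          (hk.comp measurable_snd).mul (hG.pow_const p)
    _ = _ := by
        congr 1
        rw [lintegral_lintegral_swap]
        · congr 1; ext u
          rw [lintegral_const_mul]
          exact (hG.comp measurable_prodMk_right).pow_const p
        · exact ((hk.comp measurable_snd).mul (hG.pow_const p)).aemeasurable

/-- Poisson kernel of the upper half-plane (total mass `π`). -/
noncomputable def pk (ε s : ℝ) : ℝ := ε / (s ^ 2 + ε ^ 2)

/-- Conjugate Poisson kernel. -/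
noncomputable def qk (ε s : ℝ) : ℝ := s / (s ^ 2 + ε ^ 2)

/-- Poisson integral of `f` at height `ε`, without the customary factor `π⁻¹`. -/
noncomputable def Pf (f : ℝ → ℝ) (ε x : ℝ) : ℝ := ∫ t, f t * pk ε (x - t)

/-- Conjugate Poisson integral of `f` at height `ε`, without the customary factor `π⁻¹`. As `ε → 0` it
approximates the principal value of `∫ f t / (x - t) dt`. -/
noncomputable def Qf (f : ℝ → ℝ) (ε x : ℝ) : ℝ := ∫ t, f t * qk ε (x - t)

theorem pk_nonneg {ε : ℝ} (hε : 0 < ε) (s : ℝ) : 0 ≤ pk ε s := by unfold pk; positivity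
theorem pk_pos {ε : ℝ} (hε : 0 < ε) (s : ℝ) : 0 < pk ε s := by unfold pk; positivity

theorem continuous_pk {ε : ℝ} (hε : 0 < ε) : Continuous (pk ε) := by
  unfold pk
  exact continuous_const.div (by fun_prop) (fun s => by positivity)
theorem continuous_qk {ε : ℝ} (hε : 0 < ε) : Continuous (qk ε) := by
  unfold qk
  exact continuous_id.div (by fun_prop) (fun s => by positivity)

theorem pk_eq {ε : ℝ} (hε : 0 < ε) : pk ε = fun s => ε⁻¹ * (1 + (s / ε) ^ 2)⁻¹ := by
  ext s; unfold pk; field_simp; ring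

theorem integrable_pk {ε : ℝ} (hε : 0 < ε) : Integrable (pk ε) := by
  rw [pk_eq hε]
  exact (integrable_inv_one_add_sq.comp_div hε.ne').const_mul _

theorem integral_pk {ε : ℝ} (hε : 0 < ε) : ∫ s, pk ε s = Real.pi := by
  rw [pk_eq hε, integral_const_mul, Measure.integral_comp_div (fun s => (1 + s ^ 2)⁻¹) ε,
    integral_univ_inv_one_add_sq, abs_of_pos hε, smul_eq_mul, ← mul_assoc,
    inv_mul_cancel₀ hε.ne', one_mul]

theorem pk_le {ε : ℝ} (hε : 0 < ε) (s : ℝ) : pk ε s ≤ ε⁻¹ := by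
  unfold pk
  rw [div_le_iff₀ (by positivity)]
  field_simp
  nlinarith [sq_nonneg s]

theorem abs_qk_le {ε : ℝ} (hε : 0 < ε) (s : ℝ) : |qk ε s| ≤ ε⁻¹ := by
  unfold qk
  rw [abs_div, abs_of_pos (show 0 < s ^ 2 + ε ^ 2 by positivity), div_le_iff₀ (by positivity)]
  field_simp
  nlinarith [sq_nonneg (|s| - ε), sq_abs s, abs_nonneg s]

theorem abs_qk_le' {ε : ℝ} (s : ℝ) : |qk ε s| ≤ |s|⁻¹ := by
  unfold qk
  rcases eq_or_ne s 0 with rfl | hs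
  · simp
  have : 0 < |s| := abs_pos.2 hs
  rw [abs_div, abs_of_pos (show 0 < s ^ 2 + ε ^ 2 by positivity), div_le_iff₀ (by positivity),
    ← sq_abs s]
  field_simp
  nlinarith [sq_nonneg ε]

theorem qk_neg (ε s : ℝ) : qk ε (-s) = - qk ε s := by unfold qk; rw [neg_sq, neg_div]
theorem pk_neg (ε s : ℝ) : pk ε (-s) = pk ε s := by unfold pk; rw [neg_sq]

theorem measurable_pk (ε : ℝ) : Measurable (pk ε) := by unfold pk; fun_prop
theorem measurable_qk (ε : ℝ) : Measurable (qk ε) := by unfold qk; fun_prop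

/-- Bound for the Poisson integral on `L^p`. -/
theorem lintegral_conv_le {p : ℝ} (hp : 1 < p) (f : ℝ → ℝ) (hf : Measurable f) {ε : ℝ} (hε : 0 < ε) :
    ∫⁻ x, ENNReal.ofReal |Pf f ε x| ^ p ≤
      ENNReal.ofReal Real.pi ^ p * ∫⁻ x, ENNReal.ofReal |f x| ^ p := by
  have h1 : ∀ x, ENNReal.ofReal |Pf f ε x| ≤
      ∫⁻ u, ENNReal.ofReal (pk ε u) * ENNReal.ofReal |f (x - u)| := by
    intro x
    have : Pf f ε x = ∫ u, f (x - u) * pk ε u := by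
      unfold Pf
      rw [← integral_sub_left_eq_self _ volume x]
      simp
    rw [this, ← Real.norm_eq_abs, ofReal_norm]
    refine (enorm_integral_le_lintegral_enorm _).trans (le_of_eq ?_)
    congr 1; ext u
    rw [← ofReal_norm, norm_mul, mul_comm, Real.norm_of_nonneg (pk_nonneg hε u),
      ENNReal.ofReal_mul (pk_nonneg hε u), Real.norm_eq_abs]
  have h2 := lintegral_mink hp (fun u => ENNReal.ofReal (pk ε u))
    (measurable_pk ε).ennreal_ofReal (fun x u => ENNReal.ofReal |f (x - u)|)
    (by
      have : Measurable fun z : ℝ × ℝ => ENNReal.ofReal |f (z.1 - z.2)| := by fun_prop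
      exact this)
  have hp0 : 0 < p := by linarith
  refine (lintegral_mono fun x => ENNReal.rpow_le_rpow (h1 x) hp0.le).trans (h2.trans ?_)
  have h3 : ∀ u, ∫⁻ x, ENNReal.ofReal |f (x - u)| ^ p = ∫⁻ x, ENNReal.ofReal |f x| ^ p := fun u =>
    lintegral_sub_right_eq_self (fun x => ENNReal.ofReal |f x| ^ p) u
  have h4 : ∫⁻ u, ENNReal.ofReal (pk ε u) = ENNReal.ofReal Real.pi := by
    rw [← integral_pk hε, ofReal_integral_eq_lintegral_ofReal (integrable_pk hε)
      (Eventually.of_forall (pk_nonneg hε))]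
  simp only [h3]
  rw [lintegral_mul_const _ (measurable_pk ε).ennreal_ofReal, h4, ← mul_assoc]
  gcongr
  nth_rewrite 2 [← ENNReal.rpow_one (ENNReal.ofReal Real.pi)]
  rw [← ENNReal.rpow_add _ _ (by simp [Real.pi_pos]) (by simp)]
  simp

/-! ### The Cauchy integral and an inequality of Calderón -/

/-- Bounded measurable functions vanishing outside a bounded interval. -/
structure BddSupp (f : ℝ → ℝ) : Prop where
  meas : Measurable f
  bdd : ∃ K, ∀ x, |f x| ≤ K
  supp : ∃ M, 0 < M ∧ ∀ x, M < |x| → f x = 0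

theorem BddSupp.integrable {f : ℝ → ℝ} (hf : BddSupp f) : Integrable f := by
  obtain ⟨K, hK⟩ := hf.bdd
  obtain ⟨M, hM0, hM⟩ := hf.supp
  have h : IntegrableOn f (Icc (-M) M) :=
    Measure.integrableOn_of_bounded (M := K) (by simp) hf.meas.aestronglyMeasurable
      (Eventually.of_forall hK)
  rwa [integrableOn_iff_integrable_of_support_subset] at h
  intro x hx
  rw [mem_Icc, ← abs_le]
  by_contra h'
  exact hx (hM x (not_le.1 h'))

/-- The Cauchy integral of `f` with kernel `i / (z - t)`. On the line `Im z = ε` its real and imaginary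
parts are the Poisson and the conjugate Poisson integral (`Fc_eq`). -/
noncomputable def Fc (f : ℝ → ℝ) (z : ℂ) : ℂ := ∫ t : ℝ, (f t : ℂ) * (Complex.I / (z - t))

theorem sub_ne {z : ℂ} (hz : 0 < z.im) (t : ℝ) : z - t ≠ 0 := by
  intro h
  have := congrArg Complex.im h
  simp at this; linarith

theorem norm_ker_le {z : ℂ} (hz : 0 < z.im) (t : ℝ) : ‖Complex.I / (z - t)‖ ≤ z.im⁻¹ := by
  rw [norm_div, Complex.norm_I, one_div]
  gcongr
  have := Complex.abs_im_le_norm (z - t)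
  simp at this
  exact (le_abs_self _).trans this

theorem integrable_ker {f : ℝ → ℝ} (hf : Integrable f) {z : ℂ} (hz : 0 < z.im) :
    Integrable (fun t : ℝ => (f t : ℂ) * (Complex.I / (z - t))) := by
  refine hf.ofReal.mul_bdd (c := z.im⁻¹) ?_ (Eventually.of_forall (norm_ker_le hz))
  exact (by fun_prop : Measurable fun t : ℝ => (Complex.I / (z - t))).aestronglyMeasurable

theorem norm_Fc_le {f : ℝ → ℝ} (hf : Integrable f) {z : ℂ} (hz : 0 < z.im) :
    ‖Fc f z‖ ≤ (∫ t, |f t|) * z.im⁻¹ := by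
  rw [← integral_mul_const]
  refine norm_integral_le_of_norm_le (hf.abs.mul_const _) (Eventually.of_forall fun t => ?_)
  rw [norm_mul, Complex.norm_real, Real.norm_eq_abs]
  gcongr
  exact norm_ker_le hz t

theorem norm_Fc_le' {f : ℝ → ℝ} (hf : Integrable f) {M : ℝ} (hM : ∀ x, M < |x| → f x = 0)
    {z : ℂ} (hz : M < |z.re|) :
    ‖Fc f z‖ ≤ (∫ t, |f t|) * (|z.re| - M)⁻¹ := by
  rw [← integral_mul_const]
  refine norm_integral_le_of_norm_le (hf.abs.mul_const _) (Eventually.of_forall fun t => ?_)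
  rw [norm_mul, Complex.norm_real, Real.norm_eq_abs]
  rcases lt_or_ge M |t| with h | h
  · simp [hM t h]
  gcongr
  rw [norm_div, Complex.norm_I, one_div]
  refine inv_anti₀ (by linarith) ?_
  have h1 := Complex.abs_re_le_norm (z - t)
  simp at h1
  have h2 := abs_sub_abs_le_abs_sub z.re t
  linarith

theorem differentiableAt_Fc {f : ℝ → ℝ} (hf : Integrable f) {z : ℂ} (hz : 0 < z.im) :
    DifferentiableAt ℂ (Fc f) z := by
  set s : Set ℂ := {w | z.im / 2 < w.im} with hs
  have hso : IsOpen s := isOpen_lt continuous_const Complex.continuous_im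
  have hzs : s ∈ nhds z := hso.mem_nhds (by simp only [hs, mem_ofPred_eq]; linarith)
  have hpos : ∀ w ∈ s, 0 < w.im := fun w hw => by
    simp only [hs, mem_ofPred_eq] at hw; linarith
  have := hasDerivAt_integral_of_dominated_loc_of_deriv_le (μ := volume) (𝕜 := ℂ) (x₀ := z) (s := s)
    (F := fun w (t : ℝ) => (f t : ℂ) * (Complex.I / (w - t)))
    (F' := fun w (t : ℝ) => (f t : ℂ) * (-Complex.I / (w - t) ^ 2))
    (bound := fun t => |f t| * ((z.im / 2)⁻¹) ^ 2) hzs ?_ (integrable_ker hf hz) ?_ ?_ ?_ ?_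
  · exact this.2.differentiableAt
  · filter_upwards [hzs] with w hw
    exact (integrable_ker hf (hpos w hw)).aestronglyMeasurable
  · exact hf.ofReal.aestronglyMeasurable.mul
      (by fun_prop : Measurable fun t : ℝ => (-Complex.I / (z - t) ^ 2)).aestronglyMeasurable
  · refine Eventually.of_forall fun t w hw => ?_
    have h1 : z.im / 2 < w.im := hw
    have h2 := Complex.abs_im_le_norm (w - t)
    simp at h2
    have h3 := (le_abs_self _).trans h2
    rw [norm_mul, Complex.norm_real, Real.norm_eq_abs, norm_div, norm_neg, Complex.norm_I, one_div,
      norm_pow, ← inv_pow]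
    gcongr
    linarith
  · exact hf.abs.mul_const _
  · refine Eventually.of_forall fun t w hw => ?_
    have h := sub_ne (hpos w hw) t
    have h1 : HasDerivAt (fun w : ℂ => Complex.I / (w - t)) (-Complex.I / (w - t) ^ 2) w := by
      have := (hasDerivAt_const w Complex.I).fun_div ((hasDerivAt_id w).sub_const (t : ℂ)) h
      simpa using this
    exact h1.const_mul _

theorem ker_eq {ε : ℝ} (hε : 0 < ε) (x t : ℝ) :
    Complex.I / ((x : ℂ) + ε * Complex.I - t) =
      (pk ε (x - t) : ℂ) + (qk ε (x - t) : ℂ) * Complex.I := by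
  have h : ((x : ℂ) + ε * Complex.I - t) ≠ 0 := sub_ne (by simp [hε]) t
  have h2 : ((x - t : ℝ) : ℂ) ^ 2 + (ε : ℂ) ^ 2 ≠ 0 := by
    have : (x - t) ^ 2 + ε ^ 2 ≠ 0 := by positivity
    exact_mod_cast this
  rw [div_eq_iff h]
  simp only [pk, qk, Complex.ofReal_div, Complex.ofReal_add, Complex.ofReal_pow]
  field_simp
  push_cast
  ring_nf
  simp only [Complex.I_sq]
  ring

theorem integrable_Pf {f : ℝ → ℝ} (hf : Integrable f) {ε : ℝ} (hε : 0 < ε) (x : ℝ) :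
    Integrable fun t => f t * pk ε (x - t) :=
  hf.mul_bdd (c := ε⁻¹) ((measurable_pk ε).comp (measurable_const.sub measurable_id)).aestronglyMeasurable
    (Eventually.of_forall fun t => by
      rw [Real.norm_of_nonneg (pk_nonneg hε _)]; exact pk_le hε _)

theorem integrable_Qf {f : ℝ → ℝ} (hf : Integrable f) {ε : ℝ} (hε : 0 < ε) (x : ℝ) :
    Integrable fun t => f t * qk ε (x - t) :=
  hf.mul_bdd (c := ε⁻¹) ((measurable_qk ε).comp (measurable_const.sub measurable_id)).aestronglyMeasurable
    (Eventually.of_forall fun _ => abs_qk_le hε _)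

theorem Fc_eq {f : ℝ → ℝ} (hf : Integrable f) {ε : ℝ} (hε : 0 < ε) (x : ℝ) :
    Fc f (x + ε * Complex.I) = (Pf f ε x : ℂ) + (Qf f ε x : ℂ) * Complex.I := by
  unfold Fc Pf Qf
  rw [← integral_complex_ofReal, ← integral_complex_ofReal, ← integral_mul_const,
    ← integral_add (integrable_Pf hf hε x).ofReal ((integrable_Qf hf hε x).ofReal.mul_const _)]
  congr 1; ext t
  rw [ker_eq hε]
  push_cast; ring

theorem Pf_pos {f : ℝ → ℝ} (hf : Integrable f) (hf0 : ∀ x, 0 ≤ f x) (hne : ¬ f =ᵐ[volume] 0)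
    {ε : ℝ} (hε : 0 < ε) (x : ℝ) : 0 < Pf f ε x := by
  unfold Pf
  have h0 : 0 ≤ fun t => f t * pk ε (x - t) := fun t => mul_nonneg (hf0 t) (pk_nonneg hε _)
  refine lt_of_le_of_ne (integral_nonneg h0) fun h => hne ?_
  have := (integral_eq_zero_iff_of_nonneg h0 (integrable_Pf hf hε x)).1 h.symm
  filter_upwards [this] with t ht
  simpa [(pk_pos hε (x - t)).ne'] using ht

theorem re_Fc_pos {f : ℝ → ℝ} (hf : Integrable f) (hf0 : ∀ x, 0 ≤ f x) (hne : ¬ f =ᵐ[volume] 0)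
    {z : ℂ} (hz : 0 < z.im) : 0 < (Fc f z).re := by
  have := Fc_eq hf hz z.re
  rw [Complex.re_add_im] at this
  rw [this]
  simpa using Pf_pos hf hf0 hne hz z.re

/-- On the right half-plane `|w|^p` is controlled by `(Re w)^p` up to a multiple of the harmonic
function `Re (w^p)`. -/
theorem calderon_ineq {p : ℝ} (hp : 1 < p) (hp2 : p ≤ 2) :
    ∃ A > 0, ∃ B > 0, ∀ w : ℂ, 0 < w.re → ‖w‖ ^ p ≤ A * w.re ^ p - B * (w ^ (p : ℂ)).re := by
  -- `θ₁` lies between `π / (2 p)` and `π / 2`, and `p θ₁ < π`: for `|arg w| ≤ θ₁` the cosine of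
  -- `arg w` is bounded below, and for `|arg w| > θ₁` the cosine of `p * arg w` is bounded away from `0`
  -- on the negative side.
  set θ₁ : ℝ := Real.pi / 2 * ((1 + 1 / p) / 2) with hθ
  have hpi := Real.pi_pos
  have hp0 : 0 < p := by linarith
  have hlt : 1 / p < 1 := by rw [div_lt_one hp0]; exact hp
  have hθ0 : 0 < θ₁ := by positivity
  have hθlt : θ₁ < Real.pi / 2 := by rw [hθ]; nlinarith
  have hpθ : p * θ₁ = Real.pi / 2 * ((p + 1) / 2) := by rw [hθ]; field_simp
  have hpθ1 : Real.pi / 2 < p * θ₁ := by rw [hpθ]; nlinarith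
  have hpθ2 : p * θ₁ < Real.pi := by rw [hpθ]; nlinarith
  set c := - Real.cos (p * θ₁) with hc
  have hc0 : 0 < c := by
    rw [hc, neg_pos]; exact Real.cos_neg_of_pi_div_two_lt_of_lt hpθ1 (by linarith)
  set d := Real.cos θ₁ with hd
  have hd0 : 0 < d := Real.cos_pos_of_mem_Ioo ⟨by linarith, hθlt⟩
  refine ⟨(1 + 1 / c) / d ^ p, by positivity, 1 / c, by positivity, fun w hw => ?_⟩
  have hw0 : w ≠ 0 := by rintro rfl; simp at hw
  set ρ := ‖w‖ with hρ
  have hρ0 : 0 < ρ := norm_pos_iff.2 hw0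
  set θ := w.arg with hθw
  have hre : w.re = ρ * Real.cos θ := (Complex.norm_mul_cos_arg w).symm
  have hθabs : |θ| < Real.pi / 2 := Complex.abs_arg_lt_pi_div_two_iff.2 (Or.inl hw)
  have hcos0 : 0 < Real.cos θ := by
    rw [← Real.cos_abs]
    exact Real.cos_pos_of_mem_Ioo ⟨by linarith [abs_nonneg θ], hθabs⟩
  have hpow : (w ^ (p : ℂ)).re = ρ ^ p * Real.cos (p * |θ|) := by
    rw [Complex.cpow_ofReal_re]
    congr 1
    rw [← Real.cos_abs, abs_mul, abs_of_pos (a := p) hp0, mul_comm]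
  rw [hpow, hre, Real.mul_rpow hρ0.le hcos0.le]
  have hρp : 0 < ρ ^ p := by positivity
  suffices h : 1 ≤ (1 + 1 / c) / d ^ p * Real.cos θ ^ p - 1 / c * Real.cos (p * |θ|) by
    nlinarith
  rcases le_or_gt |θ| θ₁ with h | h
  · have h1 : d ≤ Real.cos θ := by
      rw [← Real.cos_abs θ]
      exact Real.cos_le_cos_of_nonneg_of_le_pi (abs_nonneg _) (by linarith) h
    have h2 : (1 + 1 / c) ≤ (1 + 1 / c) / d ^ p * Real.cos θ ^ p := by
      rw [div_mul_eq_mul_div, le_div_iff₀ (by positivity)]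
      gcongr
    have h3 : 1 / c * Real.cos (p * |θ|) ≤ 1 / c * 1 := by
      gcongr; exact Real.cos_le_one _
    linarith
  · have h1 : Real.cos (p * |θ|) ≤ - c := by
      rw [hc, neg_neg]
      refine Real.cos_le_cos_of_nonneg_of_le_pi (by positivity) (by nlinarith) (by gcongr)
    have h2 : 1 / c * Real.cos (p * |θ|) ≤ 1 / c * (-c) := by gcongr
    have h3 : 1 / c * (-c) = -1 := by field_simp
    have h4 : 0 ≤ (1 + 1 / c) / d ^ p * Real.cos θ ^ p := by positivity
    linarith

/-! ### Riesz' bound for conjugate Poisson integrals -/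

theorem measurable_Qf {f : ℝ → ℝ} (hf : Measurable f) (ε : ℝ) : Measurable (Qf f ε) := by
  have : StronglyMeasurable fun x => ∫ t, f t * qk ε (x - t) :=
    StronglyMeasurable.integral_prod_right (f := fun x t => f t * qk ε (x - t)) (by
      refine Measurable.stronglyMeasurable ?_
      exact (hf.comp measurable_snd).mul ((measurable_qk ε).comp (measurable_fst.sub measurable_snd)))
  exact this.measurable

theorem measurable_Pf {f : ℝ → ℝ} (hf : Measurable f) (ε : ℝ) : Measurable (Pf f ε) := by
  have : StronglyMeasurable fun x => ∫ t, f t * pk ε (x - t) :=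
    StronglyMeasurable.integral_prod_right (f := fun x t => f t * pk ε (x - t)) (by
      refine Measurable.stronglyMeasurable ?_
      exact (hf.comp measurable_snd).mul ((measurable_pk ε).comp (measurable_fst.sub measurable_snd)))
  exact this.measurable

/-- Decay of the Cauchy integral along a horizontal line. -/
theorem norm_Fc_decay {f : ℝ → ℝ} (hf : Integrable f) {M : ℝ} (hM0 : 0 < M)
    (hM : ∀ x, M < |x| → f x = 0) {ε : ℝ} (hε : 0 < ε) (x : ℝ) :
    ‖Fc f (x + ε * Complex.I)‖ ≤ (∫ t, |f t|) * (1 + (1 + M) / ε) * (1 + |x|)⁻¹ := by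
  set K := ∫ t, |f t|
  have hK : 0 ≤ K := integral_nonneg fun t => abs_nonneg _
  set a := ‖Fc f (x + ε * Complex.I)‖ with ha
  have ha0 : 0 ≤ a := norm_nonneg _
  have h1 : a ≤ K * ε⁻¹ := by
    have := norm_Fc_le hf (z := x + ε * Complex.I) (by simpa using hε)
    simpa using this
  have h2 : a * (|x| - M) ≤ K := by
    rcases lt_or_ge M |x| with h | h
    · have := norm_Fc_le' hf hM (z := x + ε * Complex.I) (by simpa using h)
      simp only [Complex.add_re, Complex.ofReal_re, Complex.mul_re, Complex.I_re, mul_zero,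
        Complex.ofReal_im, Complex.I_im, mul_one, sub_self, add_zero] at this
      rwa [← div_eq_mul_inv, le_div_iff₀ (by linarith)] at this
    · nlinarith
  rw [← div_eq_mul_inv _ (1 + |x|), le_div_iff₀ (by positivity)]
  have h3 : a * (1 + M) ≤ K * ε⁻¹ * (1 + M) := by gcongr
  have : K * (1 + (1 + M) / ε) = K + K * ε⁻¹ * (1 + M) := by ring
  linarith

/-- For `f ≥ 0` the Cauchy integral has positive real part, so its `p`-th power is holomorphic in the
upper half-plane. It decays like `|z|^(-p)`, and Cauchy's theorem on the rectangles
`[-N, N] × [ε, ε + N]` shows that its integral over a horizontal line vanishes. -/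
theorem integral_Fc_cpow {f : ℝ → ℝ} (hf : BddSupp f) (hf0 : ∀ x, 0 ≤ f x)
    (hne : ¬ f =ᵐ[volume] 0) {p : ℝ} (hp : 1 < p) {ε : ℝ} (hε : 0 < ε) :
    Integrable (fun x : ℝ => Fc f (x + ε * Complex.I) ^ (p : ℂ)) ∧
      ∫ x : ℝ, Fc f (x + ε * Complex.I) ^ (p : ℂ) = 0 := by
  obtain ⟨M, hM0, hM⟩ := hf.supp
  have hfi := hf.integrable
  have hp0 : 0 < p := by linarith
  set G : ℂ → ℂ := fun z => Fc f z ^ (p : ℂ) with hG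
  set K := ∫ t, |f t| with hKdef
  have hK : 0 ≤ K := integral_nonneg fun t => abs_nonneg _
  have hGd : ∀ z : ℂ, 0 < z.im → DifferentiableAt ℂ G z := fun z hz =>
    (differentiableAt_Fc hfi hz).cpow (differentiableAt_const _)
      (Or.inl (re_Fc_pos hfi hf0 hne hz))
  have hGn : ∀ z, ‖G z‖ = ‖Fc f z‖ ^ p := fun z => Complex.norm_cpow_real _ _
  have hcont : Continuous fun x : ℝ => G (x + ε * Complex.I) := by
    rw [continuous_iff_continuousAt]
    intro x
    exact ContinuousAt.comp (f := fun x : ℝ => (x : ℂ) + ε * Complex.I)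
      (hGd _ (by simpa using hε)).continuousAt (by fun_prop)
  have hInt : Integrable fun x : ℝ => G (x + ε * Complex.I) := by
    have h1 : Integrable fun x : ℝ => (K * (1 + (1 + M) / ε)) ^ p * (1 + ‖x‖) ^ (-p) :=
      (integrable_one_add_norm (by simpa using hp)).const_mul _
    refine h1.mono' hcont.aestronglyMeasurable (Eventually.of_forall fun x => ?_)
    rw [hGn, Real.rpow_neg (by positivity), ← Real.inv_rpow (by positivity),
      ← Real.mul_rpow (by positivity) (by positivity)]
    exact Real.rpow_le_rpow (norm_nonneg _) (norm_Fc_decay hfi hM0 hM hε x) hp0.le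
  refine ⟨hInt, ?_⟩
  have hlim := intervalIntegral_tendsto_integral hInt tendsto_neg_atTop_atBot tendsto_id
  refine tendsto_nhds_unique hlim ?_
  have hbound : ∀ᶠ N : ℝ in atTop, ‖∫ x in (-N)..N, G (x + ε * Complex.I)‖ ≤
      4 * (2 * K) ^ p * N ^ (-(p - 1)) := by
    filter_upwards [eventually_ge_atTop (2 * M)] with N hN
    have hN0 : 0 < N := by linarith
    have hrect := Complex.integral_boundary_rect_eq_zero_of_differentiableOn G
      (⟨-N, ε⟩ : ℂ) (⟨N, ε + N⟩ : ℂ) (by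
        intro z hz
        refine (hGd z ?_).differentiableWithinAt
        have h2 := hz.2
        simp only [mem_preimage] at h2
        rw [uIcc_of_le (by linarith)] at h2
        linarith [h2.1])
    simp only at hrect
    have hb1 : ∀ z : ℂ, N ≤ z.im → ‖G z‖ ≤ (2 * K / N) ^ p := by
      intro z hz
      rw [hGn]
      refine Real.rpow_le_rpow (norm_nonneg _) ?_ hp0.le
      refine (norm_Fc_le hfi (by linarith)).trans ?_
      rw [← hKdef, ← div_eq_mul_inv]
      gcongr
      linarith
    have hb2 : ∀ z : ℂ, N = |z.re| → ‖G z‖ ≤ (2 * K / N) ^ p := by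
      intro z hz
      rw [hGn]
      refine Real.rpow_le_rpow (norm_nonneg _) ?_ hp0.le
      refine (norm_Fc_le' hfi hM (by linarith)).trans ?_
      rw [← hKdef, ← div_eq_mul_inv, ← hz, div_le_div_iff₀ (by linarith) hN0]
      nlinarith
    have e1 : ‖∫ x in (-N)..N, G (x + (ε + N : ℝ) * Complex.I)‖ ≤ (2 * K / N) ^ p * |N - (-N)| :=
      intervalIntegral.norm_integral_le_of_norm_le_const fun x _ => hb1 _ (by simp; linarith)
    have e2 : ‖∫ y in ε..(ε + N), G ((N : ℝ) + y * Complex.I)‖ ≤ (2 * K / N) ^ p * |ε + N - ε| :=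
      intervalIntegral.norm_integral_le_of_norm_le_const fun x _ => hb2 _ (by
        simp [abs_of_pos hN0])
    have e3 : ‖∫ y in ε..(ε + N), G ((-N : ℝ) + y * Complex.I)‖ ≤ (2 * K / N) ^ p * |ε + N - ε| :=
      intervalIntegral.norm_integral_le_of_norm_le_const fun x _ => hb2 _ (by
        simp [abs_of_pos hN0])
    have e0 : (∫ x in (-N)..N, G (x + ε * Complex.I)) =
        (∫ x in (-N)..N, G (x + (ε + N : ℝ) * Complex.I))
        - Complex.I * (∫ y in ε..(ε + N), G ((N : ℝ) + y * Complex.I))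
        + Complex.I * (∫ y in ε..(ε + N), G ((-N : ℝ) + y * Complex.I)) := by
      simp only [smul_eq_mul] at hrect
      linear_combination hrect
    rw [e0]
    refine (norm_add_le _ _).trans ((add_le_add_left (norm_sub_le _ _) _).trans ?_)
    rw [norm_mul, norm_mul, Complex.norm_I, one_mul, one_mul]
    have a1 : |N - (-N)| = 2 * N := by rw [abs_of_pos] <;> linarith
    have a2 : |ε + N - ε| = N := by rw [abs_of_pos] <;> linarith
    rw [a1] at e1
    rw [a2] at e2 e3
    have : 4 * (2 * K) ^ p * N ^ (-(p - 1)) = (2 * K / N) ^ p * (4 * N) := by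
      rw [Real.div_rpow (by positivity) hN0.le, neg_sub, Real.rpow_sub hN0, Real.rpow_one]
      ring
    rw [this]
    linarith
  have hz : Tendsto (fun N : ℝ => 4 * (2 * K) ^ p * N ^ (-(p - 1))) atTop (nhds 0) := by
    have := (tendsto_rpow_neg_atTop (by linarith : 0 < p - 1)).const_mul (4 * (2 * K) ^ p)
    simpa using this
  exact squeeze_zero_norm' hbound hz

/-- Riesz' bound for nonnegative `f` and `1 < p ≤ 2`, with a constant independent of the height. -/
theorem riesz_nonneg {p : ℝ} (hp : 1 < p) (hp2 : p ≤ 2) :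
    ∃ C : ENNReal, C ≠ ⊤ ∧ ∀ f : ℝ → ℝ, BddSupp f → (∀ x, 0 ≤ f x) → ∀ ε > 0,
      ∫⁻ x, ENNReal.ofReal |Qf f ε x| ^ p ≤ C * ∫⁻ x, ENNReal.ofReal |f x| ^ p := by
  obtain ⟨A, hA, B, hB, hAB⟩ := calderon_ineq hp hp2
  have hp0 : 0 < p := by linarith
  refine ⟨ENNReal.ofReal A * ENNReal.ofReal Real.pi ^ p, by finiteness, fun f hf hf0 ε hε => ?_⟩
  by_cases hne : f =ᵐ[volume] 0
  · have : ∀ x, Qf f ε x = 0 := by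
      intro x
      unfold Qf
      rw [integral_eq_zero_of_ae]
      filter_upwards [hne] with t ht
      simp [ht]
    simp [this, hp0]
  have hfi := hf.integrable
  obtain ⟨hGi, hG0⟩ := integral_Fc_cpow hf hf0 hne hp hε
  set F : ℝ → ℂ := fun x => Fc f (x + ε * Complex.I) with hF
  have hFe : ∀ x, F x = (Pf f ε x : ℂ) + (Qf f ε x : ℂ) * Complex.I := fun x => Fc_eq hfi hε x
  have hre : ∀ x, (F x).re = Pf f ε x := fun x => by rw [hFe]; simp
  have him : ∀ x, (F x).im = Qf f ε x := fun x => by rw [hFe]; simp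
  have hP : ∀ x, 0 < Pf f ε x := Pf_pos hfi hf0 hne hε
  have hni : Integrable fun x => ‖F x‖ ^ p := by
    refine hGi.norm.congr (Eventually.of_forall fun x => ?_)
    exact Complex.norm_cpow_real _ _
  have hPi : Integrable fun x => Pf f ε x ^ p := by
    refine hni.mono' ((measurable_Pf hf.meas ε).pow_const p).aestronglyMeasurable
      (Eventually.of_forall fun x => ?_)
    rw [Real.norm_of_nonneg (by have := hP x; positivity), ← hre]
    exact Real.rpow_le_rpow (by rw [hre]; exact (hP x).le)
      ((le_abs_self _).trans (Complex.abs_re_le_norm _)) hp0.le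
  have hle : ∫ x, ‖F x‖ ^ p ≤ A * ∫ x, Pf f ε x ^ p := by
    have hrei : Integrable fun x => (F x ^ (p : ℂ)).re := hGi.re
    have h0 : ∫ x, (F x ^ (p : ℂ)).re = 0 := by
      have := integral_re hGi
      simp only [RCLike.re_eq_complex_re] at this
      rw [hF, this, hG0]; simp
    calc _ ≤ ∫ x, (A * Pf f ε x ^ p - B * (F x ^ (p : ℂ)).re) := by
          refine integral_mono hni ((hPi.const_mul A).sub (hrei.const_mul B)) fun x => ?_
          have := hAB (F x) (by rw [hre]; exact hP x)
          rwa [hre] at this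
      _ = _ := by
          rw [integral_sub (hPi.const_mul A) (hrei.const_mul B), integral_const_mul,
            integral_const_mul, h0]
          ring
  calc _ ≤ ∫⁻ x, ENNReal.ofReal (‖F x‖ ^ p) := by
        refine lintegral_mono fun x => ?_
        rw [ENNReal.ofReal_rpow_of_nonneg (abs_nonneg _) hp0.le]
        refine ENNReal.ofReal_le_ofReal (Real.rpow_le_rpow (abs_nonneg _) ?_ hp0.le)
        rw [← him]
        exact Complex.abs_im_le_norm _
    _ = ENNReal.ofReal (∫ x, ‖F x‖ ^ p) := by
        rw [ofReal_integral_eq_lintegral_ofReal hni (Eventually.of_forall fun x => by positivity)]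
    _ ≤ ENNReal.ofReal (A * ∫ x, Pf f ε x ^ p) := ENNReal.ofReal_le_ofReal hle
    _ = ENNReal.ofReal A * ∫⁻ x, ENNReal.ofReal |Pf f ε x| ^ p := by
        rw [ENNReal.ofReal_mul hA.le, ofReal_integral_eq_lintegral_ofReal hPi
          (Eventually.of_forall fun x => by have := hP x; positivity)]
        congr 2; ext x
        rw [abs_of_pos (hP x), ENNReal.ofReal_rpow_of_nonneg (hP x).le hp0.le]
    _ ≤ _ := by
        rw [mul_assoc]
        gcongr
        exact lintegral_conv_le hp f hf.meas hε

theorem Qf_sub {f g : ℝ → ℝ} (hf : Integrable f) (hg : Integrable g) {ε : ℝ} (hε : 0 < ε) (x : ℝ) :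
    Qf (fun t => f t - g t) ε x = Qf f ε x - Qf g ε x := by
  unfold Qf
  rw [← integral_sub (integrable_Qf hf hε x) (integrable_Qf hg hε x)]
  congr 1; ext t; ring

/-- Riesz' bound for `1 < p ≤ 2`, by splitting into positive and negative parts. -/
theorem riesz_small {p : ℝ} (hp : 1 < p) (hp2 : p ≤ 2) :
    ∃ C : ENNReal, C ≠ ⊤ ∧ ∀ f : ℝ → ℝ, BddSupp f → ∀ ε > 0,
      ∫⁻ x, ENNReal.ofReal |Qf f ε x| ^ p ≤ C * ∫⁻ x, ENNReal.ofReal |f x| ^ p := by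
  obtain ⟨C, hC, h⟩ := riesz_nonneg hp hp2
  have hp0 : 0 < p := by linarith
  refine ⟨2 ^ (p - 1) * (C + C), by finiteness, fun f hf ε hε => ?_⟩
  obtain ⟨K, hK⟩ := hf.bdd
  obtain ⟨M, hM0, hM⟩ := hf.supp
  have hpos : ∀ g : ℝ → ℝ, g = (fun x => max (f x) 0) ∨ g = (fun x => max (-f x) 0) →
      BddSupp g ∧ (∀ x, 0 ≤ g x) ∧ ∀ x, |g x| ≤ |f x| := by
    have hm := hf.meas
    rintro g (rfl | rfl)
    · have h1 : ∀ x, |max (f x) 0| ≤ |f x| := fun x => by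
        rw [abs_of_nonneg (le_max_right _ _)]
        exact max_le (le_abs_self _) (abs_nonneg _)
      exact ⟨⟨by fun_prop, ⟨K, fun x => (h1 x).trans (hK x)⟩, ⟨M, hM0, fun x hx => by simp [hM x hx]⟩⟩,
        fun x => le_max_right _ _, h1⟩
    · have h1 : ∀ x, |max (-f x) 0| ≤ |f x| := fun x => by
        rw [abs_of_nonneg (le_max_right _ _)]
        exact max_le (neg_le_abs _) (abs_nonneg _)
      exact ⟨⟨by fun_prop, ⟨K, fun x => (h1 x).trans (hK x)⟩, ⟨M, hM0, fun x hx => by simp [hM x hx]⟩⟩,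
        fun x => le_max_right _ _, h1⟩
  obtain ⟨b1, n1, l1⟩ := hpos _ (Or.inl rfl)
  obtain ⟨b2, n2, l2⟩ := hpos _ (Or.inr rfl)
  set g₁ := fun x => max (f x) 0
  set g₂ := fun x => max (-f x) 0
  have hfg : f = fun t => g₁ t - g₂ t := by
    ext t
    simp only [g₁, g₂]
    rw [max_comm (f t), max_comm (-f t)]
    rcases le_total 0 (f t) with h | h
    · rw [max_eq_right h, max_eq_left (by linarith)]; ring
    · rw [max_eq_left h, max_eq_right (by linarith)]; ring
  have hQ : ∀ x, Qf f ε x = Qf g₁ ε x - Qf g₂ ε x := fun x => by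
    conv_lhs => rw [hfg]
    exact Qf_sub b1.integrable b2.integrable hε x
  have e : ∀ g : ℝ → ℝ, BddSupp g → (∀ x, 0 ≤ g x) → (∀ x, |g x| ≤ |f x|) →
      ∫⁻ x, ENNReal.ofReal |Qf g ε x| ^ p ≤ C * ∫⁻ x, ENNReal.ofReal |f x| ^ p := by
    intro g bg ng lg
    refine (h g bg ng ε hε).trans ?_
    gcongr C * ?_
    exact lintegral_mono fun x => ENNReal.rpow_le_rpow (ENNReal.ofReal_le_ofReal (lg x)) hp0.le
  calc _ ≤ ∫⁻ x, 2 ^ (p - 1) * (ENNReal.ofReal |Qf g₁ ε x| ^ p + ENNReal.ofReal |Qf g₂ ε x| ^ p) := by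
        refine lintegral_mono fun x => ?_
        refine le_trans ?_ (ENNReal.rpow_add_le_mul_rpow_add_rpow _ _ hp.le)
        refine ENNReal.rpow_le_rpow ?_ hp0.le
        rw [← ENNReal.ofReal_add (abs_nonneg _) (abs_nonneg _), hQ]
        exact ENNReal.ofReal_le_ofReal (abs_sub _ _)
    _ = 2 ^ (p - 1) * ((∫⁻ x, ENNReal.ofReal |Qf g₁ ε x| ^ p) + ∫⁻ x, ENNReal.ofReal |Qf g₂ ε x| ^ p) := by
        have m1 := measurable_Qf b1.meas ε
        have m2 := measurable_Qf b2.meas ε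
        rw [lintegral_const_mul _ (by fun_prop), lintegral_add_left (by fun_prop)]
    _ ≤ _ := by
        rw [mul_assoc, add_mul]
        gcongr
        · exact e g₁ b1 n1 l1
        · exact e g₂ b2 n2 l2

theorem BddSupp.lintegral_lt_top {f : ℝ → ℝ} (hf : BddSupp f) {p : ℝ} (hp : 0 < p) :
    ∫⁻ x, ENNReal.ofReal |f x| ^ p < ⊤ := by
  have h : BddSupp fun x => |f x| ^ p := by
    obtain ⟨K, hK⟩ := hf.bdd
    obtain ⟨M, hM0, hM⟩ := hf.supp
    refine ⟨(measurable_norm.comp hf.meas).pow_const p, ⟨K ^ p, fun x => ?_⟩,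
      ⟨M, hM0, fun x hx => by simp [hM x hx, hp.ne']⟩⟩
    rw [abs_of_nonneg (by positivity)]
    exact Real.rpow_le_rpow (abs_nonneg _) (hK x) hp.le
  have := h.integrable.lintegral_lt_top
  simpa only [ENNReal.ofReal_rpow_of_nonneg (abs_nonneg _) hp.le] using this

/-- The conjugate Poisson kernel is odd, so the operator is skew-symmetric. -/
theorem Qf_dual {f g : ℝ → ℝ} (hf : Integrable f) (hg : Integrable g)
    {ε : ℝ} (hε : 0 < ε) : ∫ x, Qf f ε x * g x = - ∫ x, f x * Qf g ε x := by
  have h1 : ∀ x, Qf f ε x * g x = ∫ t, f t * qk ε (x - t) * g x := fun x => by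
    rw [integral_mul_const]; rfl
  have h2 : ∀ t, - (f t * Qf g ε t) = ∫ x, f t * qk ε (x - t) * g x := fun t => by
    unfold Qf
    rw [← mul_neg, ← integral_neg, ← integral_const_mul]
    congr 1; ext x
    rw [← neg_sub t x, qk_neg]; ring
  rw [← integral_neg]
  simp only [h1, h2]
  refine integral_integral_swap (f := fun x t => f t * qk ε (x - t) * g x) ?_
  have : Integrable (fun z : ℝ × ℝ => (g z.1 * f z.2) * qk ε (z.1 - z.2)) (volume.prod volume) :=
    (hg.mul_prod hf).mul_bdd (c := ε⁻¹)
      ((measurable_qk ε).comp (measurable_fst.sub measurable_snd)).aestronglyMeasurable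
      (Eventually.of_forall fun _ => abs_qk_le hε _)
  refine this.congr (Eventually.of_forall fun z => ?_)
  simp only [Function.uncurry]; ring

theorem abs_Qf_le {f : ℝ → ℝ} (hf : Integrable f) {ε : ℝ} (hε : 0 < ε) (x : ℝ) :
    |Qf f ε x| ≤ (∫ t, |f t|) * ε⁻¹ := by
  rw [← integral_mul_const, ← Real.norm_eq_abs]
  refine norm_integral_le_of_norm_le (hf.abs.mul_const _) (Eventually.of_forall fun t => ?_)
  rw [norm_mul]
  exact mul_le_mul le_rfl (abs_qk_le hε _) (norm_nonneg _) (abs_nonneg _)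

/-- Riesz' bound for `p > 2`, by duality from the conjugate exponent. -/
theorem riesz_large {p : ℝ} (hp : 2 < p) :
    ∃ C : ENNReal, C ≠ ⊤ ∧ ∀ f : ℝ → ℝ, BddSupp f → ∀ ε > 0,
      ∫⁻ x, ENNReal.ofReal |Qf f ε x| ^ p ≤ C * ∫⁻ x, ENNReal.ofReal |f x| ^ p := by
  have hp0 : 0 < p := by linarith
  have hpq : p.HolderConjugate (p / (p - 1)) := Real.HolderConjugate.conjExponent (by linarith)
  set q := p / (p - 1) with hq
  have hq1 : 1 < q := hpq.symm.lt
  have hq0 : 0 < q := by linarith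
  have hq2 : q ≤ 2 := by rw [hq, div_le_iff₀ (by linarith)]; linarith
  have hpq1 : (p - 1) * q = p := by rw [hq]; field_simp [show p - 1 ≠ 0 by linarith]
  obtain ⟨C, hC, h⟩ := riesz_small hq1 hq2
  refine ⟨C ^ (p - 1), ENNReal.rpow_ne_top_of_nonneg (by linarith) hC, fun f hf ε hε => ?_⟩
  set G := Qf f ε with hG
  have hGm : Measurable G := measurable_Qf hf.meas ε
  have hfi := hf.integrable
  set K := (∫ t, |f t|) * ε⁻¹
  have hGK : ∀ x, |G x| ≤ K := abs_Qf_le hfi hε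
  -- the bound on `[-N, N]`, by testing against `|G|^(p-2) G`
  have main : ∀ N : ℕ, ∫⁻ x in Icc (-N : ℝ) N, ENNReal.ofReal |G x| ^ p ≤
      C ^ (p - 1) * ∫⁻ x, ENNReal.ofReal |f x| ^ p := by
    intro N
    set g : ℝ → ℝ := (Icc (-N : ℝ) N).indicator fun x => |G x| ^ (p - 2) * G x with hg
    have hgabs : ∀ x, |g x| = (Icc (-N : ℝ) N).indicator (fun x => |G x| ^ (p - 1)) x := by
      intro x
      simp only [hg, indicator]
      split_ifs
      · rcases eq_or_ne (G x) 0 with h0 | h0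
        · simp [h0, show p - 1 ≠ 0 by linarith]
        · have : 0 < |G x| := abs_pos.2 h0
          rw [abs_mul, abs_of_nonneg (by positivity), show p - 1 = (p - 2) + 1 by ring,
            Real.rpow_add_one this.ne']
      · simp
    have hgB : BddSupp g := by
      refine ⟨Measurable.indicator ?_ measurableSet_Icc, ⟨K ^ (p - 1), fun x => ?_⟩,
        ⟨N + 1, by positivity, fun x hx => ?_⟩⟩
      · exact ((measurable_norm.comp hGm).pow_const _).mul hGm
      · rw [hgabs]
        simp only [indicator]
        have := (abs_nonneg _).trans (hGK x)
        split_ifs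
        · exact Real.rpow_le_rpow (abs_nonneg _) (hGK x) (by linarith)
        · positivity
      · simp only [hg]
        rw [indicator_of_notMem]
        rw [mem_Icc, ← abs_le]; linarith
    set J := ∫⁻ x in Icc (-N : ℝ) N, ENNReal.ofReal |G x| ^ p with hJ
    have hJ' : J = ∫⁻ x, (Icc (-N : ℝ) N).indicator (fun x => ENNReal.ofReal |G x| ^ p) x :=
      (lintegral_indicator measurableSet_Icc _).symm
    have hgq : ∫⁻ x, ENNReal.ofReal |g x| ^ q = J := by
      rw [hJ']
      congr 1; ext x
      rw [hgabs]
      simp only [indicator]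
      split_ifs
      · rw [ENNReal.ofReal_rpow_of_nonneg (by positivity) hq0.le, ← Real.rpow_mul (abs_nonneg _),
          hpq1, ENNReal.ofReal_rpow_of_nonneg (by positivity) hp0.le]
      · simp [hq0]
    have hJtop : J ≠ ⊤ := hgq ▸ (hgB.lintegral_lt_top hq0).ne
    have hGg : ∀ x, G x * g x = (Icc (-N : ℝ) N).indicator (fun x => |G x| ^ p) x := by
      intro x
      simp only [hg, indicator]
      split_ifs
      · rcases eq_or_ne (G x) 0 with h0 | h0
        · simp [h0, hp0.ne']
        · have : 0 < |G x| := abs_pos.2 h0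
          rw [show p = (p - 2) + 1 + 1 by ring, Real.rpow_add_one this.ne',
            Real.rpow_add_one this.ne', mul_assoc (|G x| ^ _), abs_mul_abs_self]
          ring_nf
      · simp
    have hGgi : Integrable fun x => G x * g x :=
      hgB.integrable.bdd_mul hGm.aestronglyMeasurable (Eventually.of_forall hGK)
    have hJint : J = ENNReal.ofReal (∫ x, G x * g x) := by
      rw [ofReal_integral_eq_lintegral_ofReal hGgi (Eventually.of_forall fun x => by
        simp only [hGg]; exact indicator_nonneg (fun _ _ => by positivity) _), hJ']
      congr 1; ext x
      rw [hGg]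
      simp only [indicator]
      split_ifs
      · rw [ENNReal.ofReal_rpow_of_nonneg (abs_nonneg _) hp0.le]
      · simp
    set X := ∫⁻ x, ENNReal.ofReal |f x| ^ p with hX
    have hJle : J ≤ X ^ (1 / p) * (C * J) ^ (1 / q) := by
      calc J = ENNReal.ofReal (-∫ x, f x * Qf g ε x) := by
            rw [hJint, hG, Qf_dual hfi hgB.integrable hε]
        _ ≤ ∫⁻ x, ENNReal.ofReal |f x| * ENNReal.ofReal |Qf g ε x| := by
            refine (ENNReal.ofReal_le_ofReal (le_abs_self _)).trans ?_
            rw [abs_neg, ← Real.norm_eq_abs, ofReal_norm]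
            refine (enorm_integral_le_lintegral_enorm _).trans (le_of_eq ?_)
            congr 1; ext x
            rw [enorm_mul, Real.enorm_eq_ofReal_abs, Real.enorm_eq_ofReal_abs]
        _ ≤ _ := ENNReal.lintegral_mul_le_Lp_mul_Lq volume hpq
            (measurable_norm.comp hf.meas).ennreal_ofReal.aemeasurable
            (measurable_norm.comp (measurable_Qf hgB.meas ε)).ennreal_ofReal.aemeasurable
        _ ≤ _ := by
            gcongr
            rw [← hgq]
            exact h g hgB ε hε
    rcases eq_or_ne J 0 with h0 | h0
    · rw [h0]; exact zero_le
    -- divide by `J^(1/q)` and raise to the power `p`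
    have h1 : J ^ p ≤ X * C ^ (p - 1) * J ^ (p - 1) := by
      have := ENNReal.rpow_le_rpow hJle hp0.le
      rw [ENNReal.mul_rpow_of_nonneg _ _ hp0.le, ← ENNReal.rpow_mul, ← ENNReal.rpow_mul,
        one_div_mul_cancel hp0.ne', ENNReal.rpow_one,
        show 1 / q * p = p - 1 by rw [hq]; field_simp,
        ENNReal.mul_rpow_of_nonneg _ _ (by linarith), ← mul_assoc] at this
      exact this
    have h2 : J ^ p = J * J ^ (p - 1) := by
      nth_rewrite 2 [← ENNReal.rpow_one J]
      rw [← ENNReal.rpow_add _ _ h0 hJtop]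
      ring_nf
    rw [h2] at h1
    have h3 := (ENNReal.mul_le_mul_iff_left (by simp [h0, hJtop]) (by finiteness)).1 h1
    rwa [mul_comm X] at h3
  have hU : (⋃ N : ℕ, Icc (-N : ℝ) N) = univ := by
    ext x
    simp only [mem_iUnion, mem_univ, iff_true, mem_Icc, ← abs_le]
    exact exists_nat_ge _
  have hdir : Directed (· ⊆ ·) fun N : ℕ => Icc (-N : ℝ) N := by
    refine directed_of_isDirected_le fun a b hab => Icc_subset_Icc ?_ ?_
    · simpa using hab
    · simpa using hab
  rw [← setLIntegral_univ, ← hU, setLIntegral_iUnion_of_directed _ hdir]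
  exact iSup_le main

/-- Riesz' bound: conjugate Poisson integrals are bounded on `L^p`, uniformly in the height. -/
theorem riesz {p : ℝ} (hp : 1 < p) :
    ∃ C : ENNReal, C ≠ ⊤ ∧ ∀ f : ℝ → ℝ, BddSupp f → ∀ ε > 0,
      ∫⁻ x, ENNReal.ofReal |Qf f ε x| ^ p ≤ C * ∫⁻ x, ENNReal.ofReal |f x| ^ p := by
  rcases le_or_gt p 2 with h | h
  · exact riesz_small hp h
  · exact riesz_large h

/-! ### The semigroup property -/

/-- The logarithmic part of the primitive used in `Fc_pk` vanishes at `±∞`. -/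
theorem tendsto_log_ratio (a : ℝ) {ε δ : ℝ} (hε : 0 < ε) (hδ : 0 < δ) (l : Filter ℝ)
    (hl : Tendsto (fun t : ℝ => t⁻¹) l (nhds 0)) (hl0 : ∀ᶠ t in l, t ≠ 0) :
    Tendsto (fun t : ℝ => Real.log (t ^ 2 + δ ^ 2) - Real.log ((t - a) ^ 2 + ε ^ 2)) l (nhds 0) := by
  have h1 : Tendsto (fun t : ℝ => Real.log (1 + (δ * t⁻¹) ^ 2)
      - Real.log ((1 - a * t⁻¹) ^ 2 + (ε * t⁻¹) ^ 2)) l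
      (nhds (Real.log (1 + (δ * 0) ^ 2) - Real.log ((1 - a * 0) ^ 2 + (ε * 0) ^ 2))) := by
    refine Tendsto.sub (Tendsto.log ?_ (by simp)) (Tendsto.log ?_ (by simp))
    · exact tendsto_const_nhds.add ((hl.const_mul _).pow 2)
    · exact ((tendsto_const_nhds.sub (hl.const_mul _)).pow 2).add ((hl.const_mul _).pow 2)
  have h2 : (Real.log (1 + (δ * 0) ^ 2) - Real.log ((1 - a * 0) ^ 2 + (ε * 0) ^ 2)) = 0 := by simp
  rw [h2] at h1
  refine h1.congr' ?_
  filter_upwards [hl0] with t ht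
  rw [show t ^ 2 + δ ^ 2 = t ^ 2 * (1 + (δ * t⁻¹) ^ 2) by field_simp,
    show (t - a) ^ 2 + ε ^ 2 = t ^ 2 * ((1 - a * t⁻¹) ^ 2 + (ε * t⁻¹) ^ 2) by field_simp,
    Real.log_mul (by positivity) (by positivity), Real.log_mul (by positivity) (by positivity)]
  ring

/-- The Cauchy integral of the Poisson kernel, by partial fractions. -/
theorem Fc_pk {ε δ : ℝ} (hε : 0 < ε) (hδ : 0 < δ) {a : ℝ} (ha : a ≠ 0) :
    Fc (pk δ) (a + ε * Complex.I) =
      Real.pi * (Complex.I / ((a : ℂ) + (ε + δ : ℝ) * Complex.I)) := by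
  set z : ℂ := a + ε * Complex.I with hz
  have hzim : z.im = ε := by simp [hz]
  have hzpos : 0 < z.im := by rw [hzim]; exact hε
  have hzd1 : z + δ * Complex.I ≠ 0 := fun h => ha (by simpa [hz] using congrArg Complex.re h)
  have hzd2 : z - δ * Complex.I ≠ 0 := fun h => ha (by simpa [hz] using congrArg Complex.re h)
  have hzd : z ^ 2 + (δ : ℂ) ^ 2 ≠ 0 := by
    have : z ^ 2 + (δ : ℂ) ^ 2 = (z + δ * Complex.I) * (z - δ * Complex.I) := by
      ring_nf; rw [Complex.I_sq]; ring
    rw [this]; exact mul_ne_zero hzd1 hzd2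
  have hδc : (δ : ℂ) ≠ 0 := by exact_mod_cast hδ.ne'
  set c : ℂ := Complex.I * δ / (z ^ 2 + (δ : ℂ) ^ 2) with hc
  set Φ : ℝ → ℂ := fun t => c * (((2⁻¹ * (Real.log (t ^ 2 + δ ^ 2) - Real.log ((t - a) ^ 2 + ε ^ 2)) : ℝ) : ℂ)
      - Complex.I * (Real.arctan ((t - a) / ε) : ℝ) + z / δ * (Real.arctan (t / δ) : ℝ)) with hΦ
  have hd : ∀ t : ℝ, HasDerivAt Φ (((pk δ t : ℝ) : ℂ) * (Complex.I / (z - t))) t := by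
    intro t
    have p1 : 0 < t ^ 2 + δ ^ 2 := by positivity
    have p2 : 0 < (t - a) ^ 2 + ε ^ 2 := by positivity
    have d1 : HasDerivAt (fun t : ℝ => 2⁻¹ * (Real.log (t ^ 2 + δ ^ 2) - Real.log ((t - a) ^ 2 + ε ^ 2)))
        (t / (t ^ 2 + δ ^ 2) - (t - a) / ((t - a) ^ 2 + ε ^ 2)) t := by
      have e1 : HasDerivAt (fun t : ℝ => t ^ 2 + δ ^ 2) (2 * t) t := by
        simpa using (hasDerivAt_pow 2 t).add_const (δ ^ 2)
      have e2 : HasDerivAt (fun t : ℝ => (t - a) ^ 2 + ε ^ 2) (2 * (t - a)) t := by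
        simpa using (((hasDerivAt_id t).sub_const a).fun_pow 2).add_const (ε ^ 2)
      have := ((e1.log p1.ne').sub (e2.log p2.ne')).const_mul (2⁻¹ : ℝ)
      refine this.congr_deriv ?_
      field_simp
    have d2 : HasDerivAt (fun t : ℝ => Real.arctan ((t - a) / ε)) (ε / ((t - a) ^ 2 + ε ^ 2)) t := by
      have := (((hasDerivAt_id t).sub_const a).div_const ε).arctan
      refine this.congr_deriv ?_
      simp only [id]
      field_simp
      ring
    have d3 : HasDerivAt (fun t : ℝ => Real.arctan (t / δ)) (δ / (t ^ 2 + δ ^ 2)) t := by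
      have := ((hasDerivAt_id t).div_const δ).arctan
      refine this.congr_deriv ?_
      simp only [id]
      field_simp
      ring
    have D := (((d1.ofReal_comp).sub ((d2.ofReal_comp).const_mul Complex.I)).add
      ((d3.ofReal_comp).const_mul (z / δ))).const_mul c
    refine D.congr_deriv ?_
    have hzt : z - t ≠ 0 := sub_ne hzpos t
    have q1 : (t : ℂ) ^ 2 + (δ : ℂ) ^ 2 ≠ 0 := by exact_mod_cast p1.ne'
    have q2 : ((t : ℂ) - a) ^ 2 + (ε : ℂ) ^ 2 ≠ 0 := by exact_mod_cast p2.ne'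
    have e : ((t : ℂ) - a) / (((t : ℂ) - a) ^ 2 + (ε : ℂ) ^ 2) +
        Complex.I * (ε / (((t : ℂ) - a) ^ 2 + (ε : ℂ) ^ 2)) = - 1 / (z - t) := by
      field_simp
      rw [hz]; ring_nf; rw [Complex.I_sq]; ring
    have e' : (((t / (t ^ 2 + δ ^ 2) - (t - a) / ((t - a) ^ 2 + ε ^ 2) : ℝ) : ℂ) -
        Complex.I * ((ε / ((t - a) ^ 2 + ε ^ 2) : ℝ) : ℂ) + z / δ * ((δ / (t ^ 2 + δ ^ 2) : ℝ) : ℂ))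
        = t / ((t : ℂ) ^ 2 + (δ : ℂ) ^ 2) + z / ((t : ℂ) ^ 2 + (δ : ℂ) ^ 2) + 1 / (z - t) := by
      push_cast
      have : z / δ * (δ / ((t : ℂ) ^ 2 + (δ : ℂ) ^ 2)) = z / ((t : ℂ) ^ 2 + (δ : ℂ) ^ 2) := by
        field_simp
      rw [this]
      linear_combination -e
    rw [e', hc, pk]
    push_cast
    field_simp
    ring
  have hInt := integrable_ker (integrable_pk hδ) hzpos
  have at1 : Tendsto (fun t : ℝ => (t - a) / ε) atTop atTop :=
    (tendsto_atTop_add_const_right _ (-a) tendsto_id).atTop_div_const hε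
  have at2 : Tendsto (fun t : ℝ => t / δ) atTop atTop := tendsto_id.atTop_div_const hδ
  have at3 : Tendsto (fun t : ℝ => (t - a) / ε) atBot atBot :=
    (tendsto_atBot_add_const_right _ (-a) tendsto_id).atBot_div_const hε
  have at4 : Tendsto (fun t : ℝ => t / δ) atBot atBot := tendsto_id.atBot_div_const hδ
  have lim : ∀ (l : Filter ℝ) (y : ℝ), Tendsto (fun t : ℝ => t⁻¹) l (nhds 0) → (∀ᶠ t in l, t ≠ 0) →
      Tendsto (fun t : ℝ => Real.arctan ((t - a) / ε)) l (nhds y) →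
      Tendsto (fun t : ℝ => Real.arctan (t / δ)) l (nhds y) →
      Tendsto Φ l (nhds (c * (((2⁻¹ * 0 : ℝ) : ℂ) - Complex.I * (y : ℝ) + z / δ * (y : ℝ)))) := by
    intro l y h1 h2 h3 h4
    have h5 := (tendsto_log_ratio a hε hδ l h1 h2).const_mul 2⁻¹
    have ofr : ∀ {g : ℝ → ℝ} {u : ℝ}, Tendsto g l (nhds u) →
        Tendsto (fun t => ((g t : ℝ) : ℂ)) l (nhds (u : ℂ)) := fun h =>
      (Complex.continuous_ofReal.tendsto _).comp h
    exact (((ofr h5).sub ((ofr h3).const_mul _)).add ((ofr h4).const_mul _)).const_mul c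
  have htop := lim atTop (Real.pi / 2) tendsto_inv_atTop_zero (eventually_ne_atTop 0)
    ((Real.tendsto_arctan_atTop.mono_right nhdsWithin_le_nhds).comp at1)
    ((Real.tendsto_arctan_atTop.mono_right nhdsWithin_le_nhds).comp at2)
  have hbot := lim atBot (-(Real.pi / 2)) tendsto_inv_atBot_zero (eventually_ne_atBot 0)
    ((Real.tendsto_arctan_atBot.mono_right nhdsWithin_le_nhds).comp at3)
    ((Real.tendsto_arctan_atBot.mono_right nhdsWithin_le_nhds).comp at4)
  have key : Fc (pk δ) z = _ := integral_of_hasDerivAt_of_tendsto hd hInt hbot htop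
  have hz2 : (a : ℂ) + (ε + δ : ℝ) * Complex.I = z + δ * Complex.I := by
    rw [hz]; push_cast; ring
  rw [key, hz2, hc]
  push_cast
  field_simp
  have e := mul_inv_cancel₀ hzd1
  linear_combination (-2 * (Real.pi : ℂ) * (z - δ * Complex.I)) * e
    - 2 * Real.pi * δ ^ 2 * (z + δ * Complex.I)⁻¹ * Complex.I_sq

/-- The conjugate Poisson integral of the Poisson kernel: the imaginary part of `Fc_pk`. -/
theorem Qf_pk {ε δ : ℝ} (hε : 0 < ε) (hδ : 0 < δ) {a : ℝ} (ha : a ≠ 0) :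
    Qf (pk δ) ε a = Real.pi * qk (ε + δ) a := by
  have h1 := Fc_eq (integrable_pk hδ) hε a
  rw [Fc_pk hε hδ ha] at h1
  have h2 := ker_eq (add_pos hε hδ) a 0
  rw [Complex.ofReal_zero, sub_zero, sub_zero] at h2
  rw [h2] at h1
  have := congrArg Complex.im h1
  simpa using this.symm

/-- Conjugate Poisson integrals are harmonic, hence reproduced by the Poisson kernel. -/
theorem Pf_Qf {f : ℝ → ℝ} (hf : Integrable f) {ε δ : ℝ} (hε : 0 < ε) (hδ : 0 < δ) (x : ℝ) :
    Pf (Qf f ε) δ x = Real.pi * Qf f (ε + δ) x := by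
  have h1 : ∀ t, Qf f ε t * pk δ (x - t) = ∫ y, f y * qk ε (t - y) * pk δ (x - t) := fun t => by
    rw [integral_mul_const]; rfl
  have h2 : ∀ᵐ y, ∫ t, f y * qk ε (t - y) * pk δ (x - t) = Real.pi * (f y * qk (ε + δ) (x - y)) := by
    have : ∀ᵐ y : ℝ, y ≠ x := by simp [ae_iff]
    filter_upwards [this] with y hy
    have h3 := Qf_pk hε hδ (sub_ne_zero.2 hy.symm)
    unfold Qf at h3
    rw [← integral_sub_left_eq_self _ volume x] at h3
    simp only [mul_assoc]
    rw [integral_const_mul, mul_left_comm, ← h3]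
    congr 2; ext t
    rw [show x - y - (x - t) = t - y by ring]; ring
  unfold Pf
  simp only [h1]
  rw [integral_integral_swap, integral_congr_ae h2, integral_const_mul]
  · rfl
  have h4 : Integrable fun t => pk δ (x - t) := (integrable_pk hδ).comp_sub_left x
  have : Integrable (fun z : ℝ × ℝ => (pk δ (x - z.1) * f z.2) * qk ε (z.1 - z.2)) (volume.prod volume) :=
    (h4.mul_prod hf).mul_bdd (c := ε⁻¹)
      ((measurable_qk ε).comp (measurable_fst.sub measurable_snd)).aestronglyMeasurable
      (Eventually.of_forall fun _ => abs_qk_le hε _)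
  refine this.congr (Eventually.of_forall fun z => ?_)
  simp only [Function.uncurry]; ring

/-! ### The Hilbert transform of Lipschitz functions with compact support -/

/-- Lipschitz functions with compact support, the dense class on which the Hilbert transform is
first defined. -/
structure Nice (f : ℝ → ℝ) : Prop where
  bs : BddSupp f
  lip : ∃ L, 0 ≤ L ∧ ∀ x y, |f x - f y| ≤ L * |x - y|

/-- Cut-off function of `[-1, 1]`. -/
noncomputable def cut (t : ℝ) : ℝ := (Icc (-1 : ℝ) 1).indicator (fun _ => 1) t

theorem measurable_cut : Measurable cut := measurable_const.indicator measurableSet_Icc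
theorem integrable_cut : Integrable cut := by
  unfold cut
  rw [integrable_indicator_iff measurableSet_Icc]
  exact integrableOn_const (by simp)
theorem cut_neg (t : ℝ) : cut (-t) = cut t := by
  unfold cut indicator
  simp only [mem_Icc]
  congr 1
  exact propext ⟨fun h => ⟨by linarith [h.2], by linarith [h.1]⟩, fun h => ⟨by linarith [h.2], by linarith [h.1]⟩⟩

/-- The principal value of `∫ f t / (x - t) dt` for a nice function `f`, that is, the limit of `Qf f ε`
as `ε → 0` (`Qf_tendsto_hilN`). The term with `cut` makes the integral absolutely convergent; by
oddness it does not contribute. -/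
noncomputable def hilN (f : ℝ → ℝ) (x : ℝ) : ℝ := ∫ t, (f (x - t) - f x * cut t) * t⁻¹

theorem ofReal_abs_eq (x : ℝ) : ENNReal.ofReal |x| = ‖x‖ₑ := by
  rw [← Real.norm_eq_abs, ofReal_norm]

theorem hilN_bound {f : ℝ → ℝ} {L : ℝ} (hL : 0 ≤ L) (hf : ∀ x y, |f x - f y| ≤ L * |x - y|) (x t : ℝ) :
    |(f (x - t) - f x * cut t)| * |t|⁻¹ ≤ L * cut t + |f (x - t)| := by
  unfold cut indicator
  split_ifs with h
  · rcases eq_or_ne t 0 with rfl | ht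
    · simp; positivity
    have ht' : 0 < |t| := abs_pos.2 ht
    have := hf (x - t) x
    rw [show x - t - x = -t by ring, abs_neg] at this
    have h2 : |f (x - t) - f x * 1| * |t|⁻¹ ≤ L := by
      rw [← div_eq_mul_inv, div_le_iff₀ ht']; simpa using this
    linarith [abs_nonneg (f (x - t))]
  · have ht : 1 ≤ |t| := by
      by_contra hc
      push Not at hc
      exact h ⟨(abs_lt.1 hc).1.le, (abs_lt.1 hc).2.le⟩
    simp only [mul_zero, sub_zero, zero_add]
    exact mul_le_of_le_one_right (abs_nonneg _) (inv_le_one_of_one_le₀ ht)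

theorem Qf_eq_cut {f : ℝ → ℝ} (hf : BddSupp f) {ε : ℝ} (hε : 0 < ε) (x : ℝ) :
    Qf f ε x = ∫ t, (f (x - t) - f x * cut t) * qk ε t := by
  have e1 : Qf f ε x = ∫ t, f (x - t) * qk ε t := by
    unfold Qf
    rw [← integral_sub_left_eq_self _ volume x]
    simp
  have hodd : ∫ t, cut t * qk ε t = 0 := by
    have := integral_neg_eq_self (fun t => cut t * qk ε t) volume
    simp only [cut_neg, qk_neg, mul_neg, integral_neg] at this
    linarith
  have i1 : Integrable (fun t => f (x - t) * qk ε t) := by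
    have := (integrable_Qf hf.integrable hε x).comp_sub_left x
    simpa using this
  have i2 : Integrable (fun t => f x * (cut t * qk ε t)) := by
    refine Integrable.const_mul ?_ _
    refine Integrable.mono' (integrable_cut.norm.mul_const ε⁻¹)
      ((measurable_cut.mul (measurable_qk ε)).aestronglyMeasurable) (ae_of_all _ fun t => ?_)
    rw [norm_mul]
    gcongr
    exact abs_qk_le hε t
  rw [e1]
  have : ∀ t, (f (x - t) - f x * cut t) * qk ε t = f (x - t) * qk ε t - f x * (cut t * qk ε t) :=
    fun t => by ring
  simp_rw [this]
  rw [integral_sub i1 i2, integral_const_mul, hodd, mul_zero, sub_zero]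

theorem integrable_hilN_dom {f : ℝ → ℝ} (hf : BddSupp f) (L x : ℝ) :
    Integrable (fun t => L * cut t + |f (x - t)|) :=
  (integrable_cut.const_mul L).add (hf.integrable.abs.comp_sub_left x)

theorem Qf_tendsto_hilN {f : ℝ → ℝ} (hf : Nice f) (x : ℝ) :
    Tendsto (fun ε => Qf f ε x) (nhdsWithin 0 (Ioi 0)) (nhds (hilN f x)) := by
  obtain ⟨L, hL, hl⟩ := hf.lip
  have : Tendsto (fun ε => ∫ t, (f (x - t) - f x * cut t) * qk ε t) (nhdsWithin 0 (Ioi 0))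
      (nhds (hilN f x)) := by
    refine tendsto_integral_filter_of_dominated_convergence _ ?_ ?_ (integrable_hilN_dom hf.bs L x) ?_
    · refine Eventually.of_forall fun ε => ?_
      exact (((hf.bs.meas.comp (measurable_const.sub measurable_id)).sub
        (measurable_cut.const_mul _)).mul (measurable_qk ε)).aestronglyMeasurable
    · refine Eventually.of_forall fun ε => ae_of_all _ fun t => ?_
      rw [norm_mul]
      exact (mul_le_mul_of_nonneg_left (abs_qk_le' t) (norm_nonneg _)).trans (hilN_bound hL hl x t)
    · have : ∀ᵐ t : ℝ, t ≠ 0 := by simp [ae_iff]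
      filter_upwards [this] with t ht
      refine Tendsto.const_mul _ ?_
      have h1 : Tendsto (fun ε : ℝ => t / (t ^ 2 + ε ^ 2)) (nhds 0) (nhds (t / (t ^ 2 + 0 ^ 2))) := by
        refine Tendsto.div tendsto_const_nhds ?_ (by simpa using ht)
        exact tendsto_const_nhds.add (tendsto_id.pow 2)
      have h2 : t / (t ^ 2 + 0 ^ 2) = t⁻¹ := by field_simp; ring
      rw [h2] at h1
      exact h1.mono_left nhdsWithin_le_nhds
  refine this.congr' ?_
  filter_upwards [self_mem_nhdsWithin] with ε hε
  exact (Qf_eq_cut hf.bs hε x).symm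

theorem abs_Qf_le_nice {f : ℝ → ℝ} (hf : Nice f) : ∃ B, ∀ ε > 0, ∀ x, |Qf f ε x| ≤ B := by
  obtain ⟨L, hL, hl⟩ := hf.lip
  refine ⟨L * (∫ t, cut t) + ∫ t, |f t|, fun ε hε x => ?_⟩
  rw [Qf_eq_cut hf.bs hε x, ← Real.norm_eq_abs]
  refine (norm_integral_le_of_norm_le (integrable_hilN_dom hf.bs L x) (ae_of_all _ fun t => ?_)).trans ?_
  · rw [norm_mul]
    exact (mul_le_mul_of_nonneg_left (abs_qk_le' t) (norm_nonneg _)).trans (hilN_bound hL hl x t)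
  · rw [integral_add (integrable_cut.const_mul L) (hf.bs.integrable.abs.comp_sub_left x),
      integral_const_mul, integral_sub_left_eq_self (fun t => |f t|) volume x]

theorem tendsto_seq : Tendsto (fun n : ℕ => (1 : ℝ) / ((n : ℝ) + 1)) atTop (nhdsWithin 0 (Ioi 0)) :=
  tendsto_nhdsWithin_iff.2 ⟨tendsto_one_div_add_atTop_nhds_zero_nat,
    Eventually.of_forall fun n => by simp only [mem_Ioi]; positivity⟩

theorem Nice.measurable_hilN {f : ℝ → ℝ} (hf : Nice f) : Measurable (hilN f) :=
  measurable_of_tendsto_metrizable (fun n : ℕ => measurable_Qf hf.bs.meas (1 / ((n : ℝ) + 1)))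
    (tendsto_pi_nhds.2 fun x => (Qf_tendsto_hilN hf x).comp tendsto_seq)

theorem Nice.sub {f g : ℝ → ℝ} (hf : Nice f) (hg : Nice g) : Nice (fun t => f t - g t) := by
  obtain ⟨K, hK⟩ := hf.bs.bdd
  obtain ⟨K', hK'⟩ := hg.bs.bdd
  obtain ⟨M, hM0, hM⟩ := hf.bs.supp
  obtain ⟨M', hM0', hM'⟩ := hg.bs.supp
  obtain ⟨L, hL, hl⟩ := hf.lip
  obtain ⟨L', hL', hl'⟩ := hg.lip
  refine ⟨⟨hf.bs.meas.sub hg.bs.meas, ⟨K + K', fun x => ?_⟩, ⟨max M M', lt_max_of_lt_left hM0, fun x hx => ?_⟩⟩,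
    ⟨L + L', by positivity, fun x y => ?_⟩⟩
  · exact (abs_sub _ _).trans (add_le_add (hK x) (hK' x))
  · simp only [hM x ((le_max_left _ _).trans_lt hx), hM' x ((le_max_right _ _).trans_lt hx), sub_zero]
  · rw [show f x - g x - (f y - g y) = (f x - f y) - (g x - g y) by ring, add_mul]
    exact (abs_sub _ _).trans (add_le_add (hl x y) (hl' x y))

theorem hilN_sub {f g : ℝ → ℝ} (hf : Nice f) (hg : Nice g) (x : ℝ) :
    hilN (fun t => f t - g t) x = hilN f x - hilN g x := by
  refine tendsto_nhds_unique (Qf_tendsto_hilN (hf.sub hg) x) ?_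
  refine ((Qf_tendsto_hilN hf x).sub (Qf_tendsto_hilN hg x)).congr' ?_
  filter_upwards [self_mem_nhdsWithin] with ε hε
  exact (Qf_sub hf.bs.integrable hg.bs.integrable hε x).symm

/-- Riesz' bound passes to the limit `ε → 0` by Fatou's lemma. -/
theorem hilN_Lp {p : ℝ} (hp : 1 < p) : ∃ C : ENNReal, C ≠ ⊤ ∧ ∀ f, Nice f →
    ∫⁻ x, ENNReal.ofReal |hilN f x| ^ p ≤ C * ∫⁻ x, ENNReal.ofReal |f x| ^ p := by
  obtain ⟨C, hC, h⟩ := riesz hp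
  refine ⟨C, hC, fun f hf => ?_⟩
  have hp0 : 0 < p := by linarith
  have e : ∀ x, ENNReal.ofReal |hilN f x| ^ p =
      liminf (fun n : ℕ => ENNReal.ofReal |Qf f (1 / ((n : ℝ) + 1)) x| ^ p) atTop := by
    intro x
    refine (Tendsto.liminf_eq ?_).symm
    have := ((Qf_tendsto_hilN hf x).comp tendsto_seq).abs
    exact ((ENNReal.continuous_rpow_const.comp ENNReal.continuous_ofReal).tendsto _).comp this
  simp_rw [e]
  refine (lintegral_liminf_le fun n => ?_).trans ?_
  · exact ((measurable_Qf hf.bs.meas _).abs.ennreal_ofReal.pow_const p)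
  · refine liminf_le_of_frequently_le' (Frequently.of_forall fun n => h f hf.bs _ (by positivity))

/-- The limit `ε → 0` of the semigroup identity `Pf_Qf`. -/
theorem Pf_hilN {f : ℝ → ℝ} (hf : Nice f) {δ : ℝ} (hδ : 0 < δ) (x : ℝ) :
    Pf (hilN f) δ x = Real.pi * Qf f δ x := by
  obtain ⟨B, hB⟩ := abs_Qf_le_nice hf
  have h1 : Tendsto (fun n : ℕ => Pf (Qf f (1 / ((n : ℝ) + 1))) δ x) atTop (nhds (Pf (hilN f) δ x)) := by
    unfold Pf
    refine tendsto_integral_of_dominated_convergence (fun t => B * pk δ (x - t)) ?_ ?_ ?_ ?_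
    · intro n
      exact ((measurable_Qf hf.bs.meas _).mul
        ((measurable_pk δ).comp (measurable_const.sub measurable_id))).aestronglyMeasurable
    · exact ((integrable_pk hδ).comp_sub_left x).const_mul B
    · intro n
      refine ae_of_all _ fun t => ?_
      rw [norm_mul, Real.norm_of_nonneg (pk_nonneg hδ (x - t))]
      exact mul_le_mul_of_nonneg_right (hB _ (by positivity) t) (pk_nonneg hδ _)
    · exact ae_of_all _ fun t => ((Qf_tendsto_hilN hf t).comp tendsto_seq).mul_const _
  have h2 : Tendsto (fun n : ℕ => Pf (Qf f (1 / ((n : ℝ) + 1))) δ x) atTop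
      (nhds (Real.pi * Qf f δ x)) := by
    have e : ∀ n : ℕ, Pf (Qf f (1 / ((n : ℝ) + 1))) δ x = Real.pi * Qf f (1 / ((n : ℝ) + 1) + δ) x :=
      fun n => Pf_Qf hf.bs.integrable (by positivity) hδ x
    simp_rw [e]
    refine Tendsto.const_mul _ ?_
    unfold Qf
    refine tendsto_integral_of_dominated_convergence (fun t => |f t| * δ⁻¹) ?_ ?_ ?_ ?_
    · intro n
      exact (hf.bs.meas.mul
        ((measurable_qk _).comp (measurable_const.sub measurable_id))).aestronglyMeasurable
    · exact hf.bs.integrable.abs.mul_const _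
    · intro n
      refine ae_of_all _ fun t => ?_
      rw [norm_mul]
      refine mul_le_mul_of_nonneg_left ?_ (abs_nonneg _)
      refine (abs_qk_le (by positivity) _).trans ?_
      gcongr
      have : (0 : ℝ) ≤ 1 / ((n : ℝ) + 1) := by positivity
      linarith
    · refine ae_of_all _ fun t => Tendsto.const_mul _ ?_
      have : Tendsto (fun n : ℕ => (1 : ℝ) / ((n : ℝ) + 1) + δ) atTop (nhds (0 + δ)) :=
        tendsto_one_div_add_atTop_nhds_zero_nat.add_const δ
      rw [zero_add] at this
      unfold qk
      exact Tendsto.div tendsto_const_nhds (tendsto_const_nhds.add (this.pow 2)) (by positivity)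
  exact tendsto_nhds_unique h1 h2

/-! ### The conjugate function on `L^p` -/

theorem lintegral_eq_eLpNorm {p : ℝ} (hp : 0 < p) {E : Type*} [NormedAddCommGroup E] (f : ℝ → E) :
    ∫⁻ x, ‖f x‖ₑ ^ p = eLpNorm f (ENNReal.ofReal p) volume ^ p := by
  rw [eLpNorm_eq_lintegral_rpow_enorm_toReal (by simpa using hp) (by simp), ENNReal.toReal_ofReal hp.le,
    ← ENNReal.rpow_mul, one_div, inv_mul_cancel₀ hp.ne', ENNReal.rpow_one]

theorem memLp_of_lintegral {p : ℝ} (hp : 0 < p) {E : Type*} [NormedAddCommGroup E] {f : ℝ → E}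
    (hf : AEStronglyMeasurable f) (h : ∫⁻ x, ‖f x‖ₑ ^ p < ⊤) : MemLp f (ENNReal.ofReal p) volume := by
  refine ⟨hf, ?_⟩
  rw [lintegral_eq_eLpNorm hp] at h
  by_contra hc
  rw [not_lt, top_le_iff] at hc
  rw [hc, ENNReal.top_rpow_of_pos hp] at h
  exact lt_irrefl _ h

theorem lintegral_lt_top_of_memLp {p : ℝ} (hp : 0 < p) {E : Type*} [NormedAddCommGroup E] {f : ℝ → E}
    (hf : MemLp f (ENNReal.ofReal p) volume) : ∫⁻ x, ‖f x‖ₑ ^ p < ⊤ := by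
  rw [lintegral_eq_eLpNorm hp]
  exact ENNReal.rpow_lt_top_of_nonneg hp.le hf.2.ne

theorem holder_lint {p q : ℝ} (hpq : p.HolderConjugate q) {f k : ℝ → ℝ}
    (hf : MemLp f (ENNReal.ofReal p) volume) (hk : MemLp k (ENNReal.ofReal q) volume) :
    ∫⁻ t, ‖f t * k t‖ₑ ≤ eLpNorm f (ENNReal.ofReal p) volume * eLpNorm k (ENNReal.ofReal q) volume := by
  have := ENNReal.lintegral_mul_le_Lp_mul_Lq volume hpq hf.1.enorm hk.1.enorm
  rw [lintegral_eq_eLpNorm hpq.pos, lintegral_eq_eLpNorm hpq.symm.pos, ← ENNReal.rpow_mul, ← ENNReal.rpow_mul,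
    mul_one_div_cancel hpq.pos.ne', mul_one_div_cancel hpq.symm.pos.ne', ENNReal.rpow_one, ENNReal.rpow_one] at this
  simpa [enorm_mul] using this

theorem integrable_mul_of_memLp {p q : ℝ} (hpq : p.HolderConjugate q) {f k : ℝ → ℝ}
    (hf : MemLp f (ENNReal.ofReal p) volume) (hk : MemLp k (ENNReal.ofReal q) volume) :
    Integrable (fun t => f t * k t) :=
  ⟨hf.1.mul hk.1, (holder_lint hpq hf hk).trans_lt (ENNReal.mul_lt_top hf.2 hk.2)⟩

theorem tendsto_integral_mul {p q : ℝ} (hpq : p.HolderConjugate q) {f : ℝ → ℝ} {F : ℕ → ℝ → ℝ} {k : ℝ → ℝ}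
    (hf : MemLp f (ENNReal.ofReal p) volume) (hF : ∀ n, MemLp (F n) (ENNReal.ofReal p) volume)
    (hk : MemLp k (ENNReal.ofReal q) volume)
    (h : Tendsto (fun n => eLpNorm (F n - f) (ENNReal.ofReal p) volume) atTop (nhds 0)) :
    Tendsto (fun n => ∫ t, F n t * k t) atTop (nhds (∫ t, f t * k t)) := by
  refine tendsto_integral_of_L1 _ (integrable_mul_of_memLp hpq hf hk).1
    (Eventually.of_forall fun n => integrable_mul_of_memLp hpq (hF n) hk) ?_
  have h0 : Tendsto (fun n => eLpNorm (F n - f) (ENNReal.ofReal p) volume * eLpNorm k (ENNReal.ofReal q) volume)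
      atTop (nhds 0) := by
    have := ENNReal.Tendsto.mul_const h (Or.inr hk.2.ne)
    simpa using this
  refine tendsto_of_tendsto_of_tendsto_of_le_of_le tendsto_const_nhds h0 (fun n => zero_le) (fun n => ?_)
  refine le_trans (le_of_eq ?_) (holder_lint hpq ((hF n).sub hf) hk)
  simp only [Pi.sub_apply, sub_mul]

/-- Functions that are `O(1 / (1 + |t|))` lie in `L^q` for every `q > 1`. -/
theorem memLp_of_decay {q : ℝ} (hq : 1 < q) {E : Type*} [NormedAddCommGroup E] {k : ℝ → E}
    (hk : AEStronglyMeasurable k) {K : ℝ}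
    (h : ∀ t, ‖k t‖ ≤ K * (1 + |t|)⁻¹) : MemLp k (ENNReal.ofReal q) volume := by
  have h1 : MemLp (fun t : ℝ => K * (1 + |t|)⁻¹) (ENNReal.ofReal q) volume := by
    refine MemLp.const_mul ?_ K
    have hm : AEStronglyMeasurable (fun t : ℝ => (1 + |t|)⁻¹) volume := by
      apply Measurable.aestronglyMeasurable; fun_prop
    rw [← integrable_norm_rpow_iff hm (by simp; linarith) (by simp), ENNReal.toReal_ofReal (by linarith)]
    have := integrable_one_add_norm (E := ℝ) (μ := volume) (r := q) (by simpa using hq)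
    refine this.congr (ae_of_all _ fun t => ?_)
    simp only
    have : 0 < 1 + |t| := by positivity
    rw [Real.norm_of_nonneg (inv_nonneg.2 this.le), Real.norm_eq_abs, Real.inv_rpow this.le,
      Real.rpow_neg this.le]
  exact h1.mono' hk (ae_of_all _ h)

theorem memLp_pk {q : ℝ} (hq : 1 < q) {δ : ℝ} (hδ : 0 < δ) (x : ℝ) :
    MemLp (fun t => pk δ (x - t)) (ENNReal.ofReal q) volume := by
  have : MemLp (pk δ) (ENNReal.ofReal q) volume := by
    refine memLp_of_decay hq (measurable_pk δ).aestronglyMeasurable (K := δ⁻¹ + 1) fun t => ?_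
    rw [Real.norm_of_nonneg (pk_nonneg hδ t), ← div_eq_mul_inv, le_div_iff₀ (by positivity)]
    have h1 := pk_le hδ t
    have h2 : pk δ t * |t| ≤ 1 := by
      unfold pk
      rw [div_mul_eq_mul_div, div_le_one (by positivity)]
      nlinarith [sq_nonneg (|t| - δ), sq_abs t, abs_nonneg t]
    linarith
  exact this.comp_measurePreserving (Measure.measurePreserving_sub_left volume x)

theorem memLp_qk {q : ℝ} (hq : 1 < q) {δ : ℝ} (hδ : 0 < δ) (x : ℝ) :
    MemLp (fun t => qk δ (x - t)) (ENNReal.ofReal q) volume := by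
  have : MemLp (qk δ) (ENNReal.ofReal q) volume := by
    refine memLp_of_decay hq (measurable_qk δ).aestronglyMeasurable (K := δ⁻¹ + 1) fun t => ?_
    rw [Real.norm_eq_abs, ← div_eq_mul_inv, le_div_iff₀ (by positivity)]
    have h1 := abs_qk_le hδ t
    have h2 : |qk δ t| * |t| ≤ 1 := by
      refine (mul_le_mul_of_nonneg_right (abs_qk_le' t) (abs_nonneg t)).trans ?_
      exact inv_mul_le_one
    linarith
  exact this.comp_measurePreserving (Measure.measurePreserving_sub_left volume x)

theorem nice_of_contDiff {g : ℝ → ℝ} (h1 : HasCompactSupport g) (h2 : ContDiff ℝ 1 g) : Nice g := by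
  obtain ⟨L, hL⟩ := ContDiff.lipschitzWith_of_hasCompactSupport h1 h2 one_ne_zero
  obtain ⟨K, hK⟩ := h1.exists_bound_of_continuous h2.continuous
  refine ⟨⟨h2.continuous.measurable, ⟨K, hK⟩, ?_⟩, ⟨L, L.2, fun x y => ?_⟩⟩
  · obtain ⟨M, hM⟩ := h1.isCompact.isBounded.subset_closedBall 0
    refine ⟨max M 1, by positivity, fun x hx => ?_⟩
    by_contra hc
    have := hM (subset_tsupport g (Function.mem_support.2 hc))
    rw [mem_closedBall_zero_iff, Real.norm_eq_abs] at this
    linarith [le_max_left M 1]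
  · simpa [Real.dist_eq] using hL.dist_le_mul x y

theorem Nice.memLp {f : ℝ → ℝ} (hf : Nice f) {p : ℝ} (hp : 1 < p) : MemLp f (ENNReal.ofReal p) volume := by
  refine memLp_of_lintegral (by linarith) hf.bs.meas.aestronglyMeasurable ?_
  have := hf.bs.lintegral_lt_top (by linarith : (0:ℝ) < p)
  simpa [ofReal_abs_eq] using this

/-- The conjugate function on `L^p`: the Poisson integral of `h` is the conjugate Poisson integral
of `f`. -/
theorem exists_conj {p : ℝ} (hp : 1 < p) : ∃ C : ENNReal, C ≠ ⊤ ∧ ∀ f : ℝ → ℝ,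
    MemLp f (ENNReal.ofReal p) volume → ∃ h : ℝ → ℝ, MemLp h (ENNReal.ofReal p) volume ∧
      eLpNorm h (ENNReal.ofReal p) volume ≤ C * eLpNorm f (ENNReal.ofReal p) volume ∧
      ∀ δ > 0, ∀ x, Pf h δ x = Real.pi * Qf f δ x := by
  obtain ⟨C, hC, hCb⟩ := hilN_Lp hp
  have hp0 : 0 < p := by linarith
  have hpq := Real.HolderConjugate.conjExponent hp
  have hq : 1 < p.conjExponent := hpq.symm.lt
  set P := ENNReal.ofReal p with hP
  have hP1 : 1 ≤ P := by rw [hP]; simpa using hp.le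
  have hb : ∀ f, Nice f → eLpNorm (hilN f) P volume ≤ C ^ (1 / p) * eLpNorm f P volume := by
    intro f hf
    have := hCb f hf
    simp only [ofReal_abs_eq] at this
    rw [lintegral_eq_eLpNorm hp0, lintegral_eq_eLpNorm hp0] at this
    have h2 := ENNReal.rpow_le_rpow this (show 0 ≤ 1 / p by positivity)
    rwa [ENNReal.mul_rpow_of_nonneg _ _ (show 0 ≤ 1 / p by positivity), ← ENNReal.rpow_mul, ← ENNReal.rpow_mul,
      mul_one_div_cancel hp0.ne', ENNReal.rpow_one, ENNReal.rpow_one] at h2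
  set D := C ^ (1 / p) with hD
  have hDt : D ≠ ⊤ := ENNReal.rpow_ne_top_of_nonneg (by positivity) hC
  refine ⟨D, hDt, fun f hf => ?_⟩
  -- geometric rate of approximation, so that the transforms form a summably Cauchy sequence
  have hex : ∀ n : ℕ, ∃ g, Nice g ∧ eLpNorm (f - g) P volume ≤ (2 : ENNReal)⁻¹ ^ n := by
    intro n
    obtain ⟨g, g1, g2, g3⟩ := MemLp.exist_eLpNorm_sub_le (by simp [hP]) hP1 hf
      (ε := (2⁻¹ : ℝ) ^ n) (by positivity)
    refine ⟨g, nice_of_contDiff g1 (g2.of_le (by exact_mod_cast le_top)), g3.trans (le_of_eq ?_)⟩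
    rw [ENNReal.ofReal_pow (by norm_num), ENNReal.ofReal_inv_of_pos (by norm_num)]
    simp
  choose F hF hFe using hex
  have hFm : ∀ n, MemLp (F n) P volume := fun n => (hF n).memLp hp
  have hhm : ∀ n, MemLp (hilN (F n)) P volume := fun n =>
    ⟨(hF n).measurable_hilN.aestronglyMeasurable,
      (hb _ (hF n)).trans_lt (ENNReal.mul_lt_top hDt.lt_top (hFm n).2)⟩
  have hFe' : ∀ n, eLpNorm (F n - f) P volume ≤ (2 : ENNReal)⁻¹ ^ n := fun n => by
    rw [eLpNorm_sub_comm]; exact hFe n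
  have hpow : ∀ {N n : ℕ}, N ≤ n → (2 : ENNReal)⁻¹ ^ n ≤ (2 : ENNReal)⁻¹ ^ N := fun h =>
    pow_le_pow_right_of_le_one' (by simp) h
  obtain ⟨h, hh, hlim⟩ := Lp.cauchy_complete_eLpNorm hP1 hhm
    (B := fun N => (2 * D + 1) * (2 : ENNReal)⁻¹ ^ N) (by
      rw [ENNReal.tsum_mul_left, ENNReal.tsum_geometric, ENNReal.one_sub_inv_two, inv_inv]
      finiteness) (by
      intro N n m hn hm
      have e : hilN (F n) - hilN (F m) = hilN (fun t => F n t - F m t) := by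
        ext x; exact (hilN_sub (hF n) (hF m) x).symm
      rw [e]
      have e2 : eLpNorm (fun t => F n t - F m t) P volume ≤ 2 * (2 : ENNReal)⁻¹ ^ N := by
        have : (fun t => F n t - F m t) = (F n - f) - (F m - f) := by ext t; simp
        rw [this]
        refine (eLpNorm_sub_le ((hFm n).sub hf).1 ((hFm m).sub hf).1 hP1).trans ?_
        rw [two_mul]
        exact add_le_add ((hFe' n).trans (hpow hn)) ((hFe' m).trans (hpow hm))
      refine ((hb _ ((hF n).sub (hF m))).trans (by gcongr)).trans_lt
        (b := D * (2 * (2 : ENNReal)⁻¹ ^ N)) ?_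
      rw [add_mul, one_mul, show D * (2 * (2 : ENNReal)⁻¹ ^ N) = 2 * D * (2 : ENNReal)⁻¹ ^ N by ring]
      refine ENNReal.lt_add_right (by finiteness) (by simp))
  have hF0 : Tendsto (fun n => eLpNorm (F n - f) P volume) atTop (nhds 0) := by
    refine tendsto_of_tendsto_of_tendsto_of_le_of_le tendsto_const_nhds
      (ENNReal.tendsto_pow_atTop_nhds_zero_of_lt_one (r := (2 : ENNReal)⁻¹) (by simp)) (fun n => zero_le) hFe'
  refine ⟨h, hh, ?_, fun δ hδ x => ?_⟩
  · have hle : ∀ n, eLpNorm h P volume ≤ eLpNorm (hilN (F n) - h) P volume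
        + D * (eLpNorm (F n - f) P volume + eLpNorm f P volume) := by
      intro n
      calc eLpNorm h P volume = eLpNorm ((hilN (F n)) - (hilN (F n) - h)) P volume := by
            congr 1; abel
        _ ≤ eLpNorm (hilN (F n)) P volume + eLpNorm (hilN (F n) - h) P volume :=
            eLpNorm_sub_le (hhm n).1 ((hhm n).sub hh).1 hP1
        _ ≤ D * (eLpNorm (F n - f) P volume + eLpNorm f P volume) + eLpNorm (hilN (F n) - h) P volume := by
            refine add_le_add_left ((hb _ (hF n)).trans ?_) _
            refine mul_le_mul_right ?_ _
            calc eLpNorm (F n) P volume = eLpNorm ((F n - f) + f) P volume := by congr 1; abel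
              _ ≤ _ := eLpNorm_add_le ((hFm n).sub hf).1 hf.1 hP1
        _ = _ := add_comm _ _
    have ht : Tendsto (fun n => eLpNorm (hilN (F n) - h) P volume
        + D * (eLpNorm (F n - f) P volume + eLpNorm f P volume)) atTop
        (nhds (0 + D * (0 + eLpNorm f P volume))) :=
      hlim.add (ENNReal.Tendsto.const_mul (hF0.add tendsto_const_nhds) (Or.inr hDt))
    rw [zero_add, zero_add] at ht
    exact ge_of_tendsto' ht hle
  · have t1 : Tendsto (fun n => Pf (hilN (F n)) δ x) atTop (nhds (Pf h δ x)) :=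
      tendsto_integral_mul hpq hh hhm (memLp_pk hq hδ x) hlim
    have t2 : Tendsto (fun n => Qf (F n) δ x) atTop (nhds (Qf f δ x)) :=
      tendsto_integral_mul hpq hf hFm (memLp_qk hq hδ x) hF0
    refine tendsto_nhds_unique t1 ((t2.const_mul Real.pi).congr fun n => ?_)
    exact (Pf_hilN (hF n) hδ x).symm

/-! ### Lebesgue points for the Poisson kernel -/

/-- Each `s` lies in a dyadic ball `|s| ≤ 2^k ε` on which the Poisson kernel at `s` is `O(4^(-k) / ε)`.
Summing over `k` majorizes the kernel by indicators of balls. -/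
theorem pk_dyadic {ε : ℝ} (hε : 0 < ε) (s : ℝ) :
    ∃ k : ℕ, |s| ≤ 2 ^ k * ε ∧ pk ε s ≤ 4 * (1 / 4) ^ k * ε⁻¹ := by
  have hex : ∃ k : ℕ, |s| ≤ 2 ^ k * ε := by
    obtain ⟨k, hk⟩ := pow_unbounded_of_one_lt (|s| / ε) (one_lt_two (α := ℝ))
    exact ⟨k, (div_le_iff₀ hε).1 hk.le⟩
  classical
  refine ⟨Nat.find hex, Nat.find_spec hex, ?_⟩
  rcases h : Nat.find hex with _ | k
  · have := pk_le hε s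
    have h2 : 0 < ε⁻¹ := inv_pos.2 hε
    simp only [pow_zero]; linarith
  · have h1 : ¬ |s| ≤ 2 ^ k * ε := Nat.find_min hex (by omega)
    push Not at h1
    have h2 : (2 ^ k * ε) ^ 2 ≤ s ^ 2 := by
      rw [← sq_abs s]; gcongr
    have e : (4 : ℝ) * (1 / 4) ^ (k + 1) * ε⁻¹ = ε / (2 ^ k * ε) ^ 2 := by
      rw [mul_pow, ← pow_mul, mul_comm k 2, pow_mul, pow_succ, one_div, inv_pow]
      norm_num
      field_simp
    rw [e]
    unfold pk
    gcongr
    nlinarith [sq_nonneg ε]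

/-- If the means of `G` over small balls around `x` are at most `η`, up to a constant, then so is its
Poisson integral over a small ball. -/
theorem lintegral_pk_local {G : ℝ → ENNReal} (hG : Measurable G) {x ρ : ℝ} {η : ENNReal}
    (h : ∀ r, 0 < r → r ≤ ρ → ∫⁻ t in Metric.closedBall x r, G t ≤ η * ENNReal.ofReal r)
    (hρ : 0 < ρ) {ε : ℝ} (hε : 0 < ε) :
    ∫⁻ t in Metric.closedBall x ρ, G t * ENNReal.ofReal (pk ε (x - t)) ≤ 8 * η := by
  have hmeas : ∀ k : ℕ, Measurable (fun t => ENNReal.ofReal (4 * (1 / 4) ^ k * ε⁻¹) *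
      (Metric.closedBall x (min (2 ^ k * ε) ρ)).indicator G t) := fun k =>
    (hG.indicator Metric.isClosed_closedBall.measurableSet).const_mul _
  calc ∫⁻ t in Metric.closedBall x ρ, G t * ENNReal.ofReal (pk ε (x - t))
      ≤ ∫⁻ t in Metric.closedBall x ρ, ∑' k : ℕ, ENNReal.ofReal (4 * (1 / 4) ^ k * ε⁻¹) *
        (Metric.closedBall x (min (2 ^ k * ε) ρ)).indicator G t := by
        refine setLIntegral_mono (Measurable.tsum hmeas) fun t ht => ?_
        obtain ⟨k, hk1, hk2⟩ := pk_dyadic hε (x - t)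
        refine le_trans ?_ (ENNReal.le_tsum k)
        rw [indicator_of_mem, mul_comm]
        · gcongr
        · rw [Metric.mem_closedBall, Real.dist_eq, abs_sub_comm] at ht ⊢
          exact le_min hk1 ht
    _ ≤ ∫⁻ t, ∑' k : ℕ, ENNReal.ofReal (4 * (1 / 4) ^ k * ε⁻¹) *
        (Metric.closedBall x (min (2 ^ k * ε) ρ)).indicator G t := setLIntegral_le_lintegral _ _
    _ = ∑' k : ℕ, ENNReal.ofReal (4 * (1 / 4) ^ k * ε⁻¹) *
        ∫⁻ t in Metric.closedBall x (min (2 ^ k * ε) ρ), G t := by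
        rw [lintegral_tsum fun k => (hmeas k).aemeasurable]
        refine tsum_congr fun k => ?_
        rw [lintegral_const_mul _ (hG.indicator Metric.isClosed_closedBall.measurableSet),
          lintegral_indicator Metric.isClosed_closedBall.measurableSet]
    _ ≤ ∑' k : ℕ, 4 * η * (2 : ENNReal)⁻¹ ^ k := by
        refine ENNReal.tsum_le_tsum fun k => ?_
        calc _ ≤ ENNReal.ofReal (4 * (1 / 4) ^ k * ε⁻¹) * (η * ENNReal.ofReal (2 ^ k * ε)) := by
              gcongr ENNReal.ofReal (4 * (1 / 4) ^ k * ε⁻¹) * ?_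
              refine (h _ (by positivity) (min_le_right _ _)).trans ?_
              gcongr
              exact min_le_left _ _
          _ = η * ENNReal.ofReal (4 * (2⁻¹) ^ k) := by
              rw [mul_left_comm, ← ENNReal.ofReal_mul (by positivity)]
              congr 2
              field_simp
              rw [← mul_pow]; norm_num
          _ = 4 * η * (2 : ENNReal)⁻¹ ^ k := by
              rw [ENNReal.ofReal_mul (by norm_num), ENNReal.ofReal_pow (by norm_num),
                ENNReal.ofReal_inv_of_pos (by norm_num)]
              simp
              ring
    _ = 8 * η := by
        rw [ENNReal.tsum_mul_left, ENNReal.tsum_geometric, ENNReal.one_sub_inv_two, inv_inv]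
        ring

/-- Away from the origin the Poisson kernel is `O(ε)` times the kernel of height `1`. -/
theorem pk_outer {ρ ε s : ℝ} (hρ : 0 < ρ) (hε : 0 < ε) (hs : ρ < |s|) :
    pk ε s ≤ ε * (1 + (ρ ^ 2)⁻¹) * pk 1 s := by
  have h1 : ρ ^ 2 < s ^ 2 := by rw [← sq_abs s]; gcongr
  have h0 : 0 < ρ ^ 2 := by positivity
  unfold pk
  calc ε / (s ^ 2 + ε ^ 2) ≤ ε / s ^ 2 := by
        refine div_le_div_of_nonneg_left hε.le (by linarith) ?_
        nlinarith [sq_nonneg ε]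
    _ = ε * (1 + (s ^ 2)⁻¹) * (1 / (s ^ 2 + 1 ^ 2)) := by
        have : s ^ 2 ≠ 0 := by linarith
        have : s ≠ 0 := fun h => this (by rw [h]; ring)
        field_simp
    _ ≤ _ := by gcongr

theorem tendsto_lintegral_pk {G : ℝ → ENNReal} (hG : Measurable G) {x : ℝ}
    (h : ∀ η : ENNReal, 0 < η → ∃ ρ > 0, ∀ r, 0 < r → r ≤ ρ →
      ∫⁻ t in Metric.closedBall x r, G t ≤ η * ENNReal.ofReal r)
    (hfin : ∫⁻ t, G t * ENNReal.ofReal (pk 1 (x - t)) ≠ ⊤) :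
    Tendsto (fun ε => ∫⁻ t, G t * ENNReal.ofReal (pk ε (x - t))) (nhdsWithin 0 (Ioi 0)) (nhds 0) := by
  rw [ENNReal.tendsto_nhds_zero]
  intro η hη
  obtain ⟨ρ, hρ, hρ'⟩ := h (η / 16) (by simp [hη.ne'])
  set M := ∫⁻ t, G t * ENNReal.ofReal (pk 1 (x - t)) with hM
  have hlim : Tendsto (fun ε : ℝ => ENNReal.ofReal (ε * (1 + (ρ ^ 2)⁻¹)) * M) (nhdsWithin 0 (Ioi 0))
      (nhds (ENNReal.ofReal (0 * (1 + (ρ ^ 2)⁻¹)) * M)) := by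
    refine ENNReal.Tendsto.mul_const (ENNReal.tendsto_ofReal ?_) (Or.inr hfin)
    exact (tendsto_id.mul_const _).mono_left nhdsWithin_le_nhds
  rw [zero_mul, ENNReal.ofReal_zero, zero_mul, ENNReal.tendsto_nhds_zero] at hlim
  filter_upwards [hlim (η / 2) (by simp [hη.ne']), self_mem_nhdsWithin] with ε h1 hε
  have hε : 0 < ε := hε
  rw [← lintegral_add_compl _ (Metric.isClosed_closedBall (x := x) (ε := ρ)).measurableSet]
  calc _ ≤ 8 * (η / 16) + ENNReal.ofReal (ε * (1 + (ρ ^ 2)⁻¹)) * M := by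
        refine add_le_add (lintegral_pk_local hG hρ' hρ hε) ?_
        rw [hM, ← lintegral_const_mul _ (by have := measurable_pk 1; fun_prop)]
        refine le_trans (setLIntegral_mono (by have := measurable_pk 1; fun_prop) fun t ht => ?_)
          (setLIntegral_le_lintegral _ _)
        rw [mem_compl_iff, Metric.mem_closedBall, Real.dist_eq, not_le, abs_sub_comm] at ht
        rw [mul_left_comm, ← ENNReal.ofReal_mul (by positivity)]
        gcongr
        exact pk_outer hρ hε ht
    _ ≤ η / 2 + η / 2 := by
        refine add_le_add (le_of_eq ?_) h1
        rw [show (16 : ENNReal) = 8 * 2 by norm_num, div_eq_mul_inv, div_eq_mul_inv,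
          ENNReal.mul_inv (by simp) (by simp), ← mul_assoc, mul_comm 8, mul_assoc, ← mul_assoc 8,
          ENNReal.mul_inv_cancel (by simp) (by simp), one_mul]
    _ = η := ENNReal.add_halves η

/-- Almost every point is a Lebesgue point for the Poisson kernel. -/
theorem ae_tendsto_lintegral_pk {p : ℝ} (hp : 1 < p) {g : ℝ → ℝ} (hgm : Measurable g)
    (hg : MemLp g (ENNReal.ofReal p) volume) : ∀ᵐ x : ℝ,
    Tendsto (fun ε => ∫⁻ t, ‖g t - g x‖ₑ * ENNReal.ofReal (pk ε (x - t))) (nhdsWithin 0 (Ioi 0)) (nhds 0) := by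
  have hP1 : 1 ≤ ENNReal.ofReal p := by simpa using hp.le
  have hloc : LocallyIntegrable g volume := hg.locallyIntegrable hP1
  have hpq := Real.HolderConjugate.conjExponent hp
  filter_upwards [IsUnifLocDoublingMeasure.ae_tendsto_average_norm_sub volume hloc 1] with x hx
  have hx' := hx (l := nhdsWithin 0 (Ioi 0)) (fun _ : ℝ => x) id tendsto_id (by
    filter_upwards [self_mem_nhdsWithin] with ε hε
    have : 0 < ε := hε
    simp [this.le])
  refine tendsto_lintegral_pk (by fun_prop) ?_ ?_
  · intro η hη
    obtain ⟨e, he0, he1⟩ : ∃ e : ℝ, 0 < e ∧ ENNReal.ofReal e ≤ η := by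
      rcases eq_or_ne η ⊤ with rfl | h
      · exact ⟨1, by simp⟩
      · exact ⟨η.toReal, ENNReal.toReal_pos hη.ne' h, ENNReal.ofReal_toReal_le⟩
    have := (hx'.eventually (gt_mem_nhds (show 0 < e / 2 by positivity)))
    rw [eventually_nhdsWithin_iff, Metric.eventually_nhds_iff] at this
    obtain ⟨ρ, hρ, h⟩ := this
    refine ⟨ρ / 2, by positivity, fun r hr hr' => ?_⟩
    have h1 := h (y := r) (by simp [abs_of_pos hr]; linarith) hr
    have hInt : IntegrableOn (fun t => g t - g x) (Metric.closedBall x r) :=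
      (hloc.integrableOn_isCompact (isCompact_closedBall x r)).sub
        (integrableOn_const (isCompact_closedBall x r).measure_lt_top.ne)
    rw [← ofReal_integral_norm_eq_lintegral_enorm hInt]
    refine le_trans ?_ (mul_le_mul_left he1 _)
    rw [← ENNReal.ofReal_mul he0.le]
    refine ENNReal.ofReal_le_ofReal ?_
    rw [id, setAverage_eq, smul_eq_mul, Measure.real, Real.volume_closedBall,
      ENNReal.toReal_ofReal (by positivity), inv_mul_lt_iff₀ (by positivity)] at h1
    linarith
  · have h1 : Integrable (fun t => (g t - g x) * pk 1 (x - t)) := by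
      simp only [sub_mul]
      exact (integrable_mul_of_memLp hpq hg (memLp_pk hpq.symm.lt one_pos x)).sub
        (((integrable_pk one_pos).comp_sub_left x).const_mul _)
    have h2 := h1.2
    rw [HasFiniteIntegral] at h2
    refine ne_of_lt (lt_of_le_of_lt (le_of_eq (lintegral_congr fun t => ?_)) h2)
    rw [enorm_mul, ← ofReal_abs_eq (pk 1 (x - t)), abs_of_nonneg (pk_nonneg one_pos _)]

/-! ### Almost everywhere existence of the principal value -/

/-- Truncated Hilbert kernel. -/
noncomputable def tk (ε s : ℝ) : ℝ := {s : ℝ | ε < |s|}.indicator (fun s => s⁻¹) s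

theorem measurableSet_trunc (ε : ℝ) : MeasurableSet {s : ℝ | ε < |s|} :=
  measurableSet_lt measurable_const measurable_norm

theorem measurable_tk (ε : ℝ) : Measurable (tk ε) :=
  measurable_inv.indicator (measurableSet_trunc ε)

theorem tk_neg (ε s : ℝ) : tk ε (-s) = - tk ε s := by
  unfold tk indicator
  simp only [mem_ofPred_eq, abs_neg, inv_neg]
  split_ifs <;> simp

theorem memLp_tk {q : ℝ} (hq : 1 < q) {δ : ℝ} (hδ : 0 < δ) (x : ℝ) :
    MemLp (fun t => tk δ (x - t)) (ENNReal.ofReal q) volume := by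
  have : MemLp (tk δ) (ENNReal.ofReal q) volume := by
    refine memLp_of_decay hq (measurable_tk δ).aestronglyMeasurable (K := δ⁻¹ + 1) fun t => ?_
    rw [Real.norm_eq_abs, ← div_eq_mul_inv, le_div_iff₀ (by positivity)]
    unfold tk indicator
    split_ifs with h
    · have h : δ < |t| := h
      have h0 : 0 < |t| := hδ.trans h
      rw [abs_inv, mul_add, mul_one, inv_mul_cancel₀ h0.ne']
      gcongr
    · rw [abs_zero, zero_mul]; positivity
  exact this.comp_measurePreserving (Measure.measurePreserving_sub_left volume x)

/-- The truncated and the conjugate Poisson kernel differ by at most the Poisson kernel. Hence truncated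
and conjugate Poisson integrals have the same limit at Lebesgue points. -/
theorem abs_tk_sub_qk {ε : ℝ} (hε : 0 < ε) (s : ℝ) : |tk ε s - qk ε s| ≤ pk ε s := by
  unfold tk indicator qk pk
  have hd : 0 < s ^ 2 + ε ^ 2 := by positivity
  split_ifs with h
  · have h : ε < |s| := h
    have h0 : 0 < |s| := hε.trans h
    have hs : s ≠ 0 := abs_pos.1 h0
    have : s⁻¹ - s / (s ^ 2 + ε ^ 2) = ε / s * (ε / (s ^ 2 + ε ^ 2)) := by field_simp; ring
    rw [this, abs_mul, abs_of_pos (show 0 < ε / (s ^ 2 + ε ^ 2) by positivity)]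
    refine mul_le_of_le_one_left (by positivity) ?_
    rw [abs_div, abs_of_pos hε, div_le_one h0]
    exact h.le
  · have h : ¬ ε < |s| := h
    rw [zero_sub, abs_neg, abs_div, abs_of_pos hd]
    gcongr
    exact not_lt.1 h

/-- Real truncated Hilbert transform. -/
noncomputable def Tf (f : ℝ → ℝ) (ε x : ℝ) : ℝ := ∫ t, f t * tk ε (x - t)

theorem tendsto_of_enorm {F : ℝ → ℝ} {L : ℝ → ENNReal} {a : ℝ}
    (h : ∀ ε > 0, ‖F ε - a‖ₑ ≤ L ε) (hL : Tendsto L (nhdsWithin 0 (Ioi 0)) (nhds 0)) :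
    Tendsto F (nhdsWithin 0 (Ioi 0)) (nhds a) := by
  rw [tendsto_iff_edist_tendsto_0]
  refine tendsto_of_tendsto_of_tendsto_of_le_of_le' tendsto_const_nhds hL
    (Eventually.of_forall fun _ => zero_le) ?_
  filter_upwards [self_mem_nhdsWithin] with ε hε
  rw [edist_eq_enorm_sub]
  exact h ε hε

theorem Pf_sub_enorm {p : ℝ} (hp : 1 < p) {g : ℝ → ℝ}
    (hg : MemLp g (ENNReal.ofReal p) volume) {ε : ℝ} (hε : 0 < ε) (x : ℝ) :
    ‖Pf g ε x - Real.pi * g x‖ₑ ≤ ∫⁻ t, ‖g t - g x‖ₑ * ENNReal.ofReal (pk ε (x - t)) := by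
  have hpq := Real.HolderConjugate.conjExponent hp
  have e : Pf g ε x - Real.pi * g x = ∫ t, (g t - g x) * pk ε (x - t) := by
    simp only [sub_mul]
    rw [integral_sub (integrable_mul_of_memLp hpq hg (memLp_pk hpq.symm.lt hε x))
      (((integrable_pk hε).comp_sub_left x).const_mul _), integral_const_mul,
      integral_sub_left_eq_self (pk ε) volume x, integral_pk hε, Pf]
    ring
  rw [e]
  refine (enorm_integral_le_lintegral_enorm _).trans (le_of_eq (lintegral_congr fun t => ?_))
  rw [enorm_mul, ← ofReal_abs_eq (pk ε (x - t)), abs_of_nonneg (pk_nonneg hε _)]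

theorem Tf_sub_enorm {p : ℝ} (hp : 1 < p) {g : ℝ → ℝ}
    (hg : MemLp g (ENNReal.ofReal p) volume) {ε : ℝ} (hε : 0 < ε) (x : ℝ) :
    ‖Tf g ε x - Qf g ε x‖ₑ ≤ ∫⁻ t, ‖g t - g x‖ₑ * ENNReal.ofReal (pk ε (x - t)) := by
  have hpq := Real.HolderConjugate.conjExponent hp
  have hm : Integrable (fun s => tk ε s - qk ε s) :=
    (integrable_pk hε).mono' (((measurable_tk ε).sub (measurable_qk ε)).aestronglyMeasurable)
      (ae_of_all _ (abs_tk_sub_qk hε))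
  have hodd : ∫ s, (tk ε s - qk ε s) = 0 := by
    have := integral_neg_eq_self (fun s => tk ε s - qk ε s) volume
    simp only [tk_neg, qk_neg] at this
    have h2 : ∀ s, - tk ε s - - qk ε s = - (tk ε s - qk ε s) := fun s => by ring
    simp_rw [h2] at this
    rw [integral_neg] at this
    linarith
  have i1 := integrable_mul_of_memLp hpq hg (memLp_tk hpq.symm.lt hε x)
  have i2 := integrable_mul_of_memLp hpq hg (memLp_qk hpq.symm.lt hε x)
  have e : Tf g ε x - Qf g ε x = ∫ t, (g t - g x) * (tk ε (x - t) - qk ε (x - t)) := by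
    have e1 : ∀ t, (g t - g x) * (tk ε (x - t) - qk ε (x - t)) =
        (g t * tk ε (x - t) - g t * qk ε (x - t)) - g x * (tk ε (x - t) - qk ε (x - t)) := fun t => by ring
    simp_rw [e1]
    have i3 : Integrable (fun t => g t * tk ε (x - t) - g t * qk ε (x - t)) := i1.sub i2
    rw [integral_sub i3 ((hm.comp_sub_left x).const_mul _), integral_sub i1 i2,
      integral_const_mul, integral_sub_left_eq_self (fun s => tk ε s - qk ε s) volume x, hodd, Tf, Qf]
    ring
  rw [e]
  refine (enorm_integral_le_lintegral_enorm _).trans (lintegral_mono fun t => ?_)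
  rw [enorm_mul, ← ofReal_abs_eq (tk ε (x - t) - qk ε (x - t))]
  gcongr
  exact abs_tk_sub_qk hε _

/-- With `h` as in `exists_conj`, `Qf f ε = π⁻¹ Pf h ε` tends to `h` at the Lebesgue points of `h`, and
`Tf f ε - Qf f ε` tends to `0` at the Lebesgue points of `f`. -/
theorem hilbert_real {p : ℝ} (hp : 1 < p) : ∃ C : ENNReal, C ≠ ⊤ ∧ ∀ f : ℝ → ℝ, Measurable f →
    MemLp f (ENNReal.ofReal p) volume → ∃ h : ℝ → ℝ, Measurable h ∧
      eLpNorm h (ENNReal.ofReal p) volume ≤ C * eLpNorm f (ENNReal.ofReal p) volume ∧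
      ∀ᵐ x : ℝ, Tendsto (fun ε => Tf f ε x) (nhdsWithin 0 (Ioi 0)) (nhds (h x)) := by
  obtain ⟨C, hC, hCb⟩ := exists_conj hp
  refine ⟨C, hC, fun f hfm hf => ?_⟩
  obtain ⟨h, hh, hb, hP⟩ := hCb f hf
  obtain ⟨g, hgs, hgh⟩ := hh.1
  have hgm : Measurable g := hgs.measurable
  have hg : MemLp g (ENNReal.ofReal p) volume := hh.ae_eq hgh
  refine ⟨g, hgm, by rwa [eLpNorm_congr_ae hgh.symm], ?_⟩
  filter_upwards [ae_tendsto_lintegral_pk hp hfm hf, ae_tendsto_lintegral_pk hp hgm hg] with x h1 h2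
  have t1 : Tendsto (fun ε => Pf g ε x) (nhdsWithin 0 (Ioi 0)) (nhds (Real.pi * g x)) :=
    tendsto_of_enorm (fun ε hε => Pf_sub_enorm hp hg hε x) h2
  have t2 : Tendsto (fun ε => Tf f ε x - Qf f ε x) (nhdsWithin 0 (Ioi 0)) (nhds 0) :=
    tendsto_of_enorm (fun ε hε => by rw [sub_zero]; exact Tf_sub_enorm hp hf hε x) h1
  have t3 : Tendsto (fun ε => Qf f ε x) (nhdsWithin 0 (Ioi 0)) (nhds (g x)) := by
    have := t1.const_mul Real.pi⁻¹
    rw [← mul_assoc, inv_mul_cancel₀ Real.pi_ne_zero, one_mul] at this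
    refine this.congr' ?_
    filter_upwards [self_mem_nhdsWithin] with ε hε
    have e : Pf g ε x = Pf h ε x := by
      refine integral_congr_ae ?_
      filter_upwards [hgh] with t ht
      simp only [ht]
    rw [e, hP ε hε x, ← mul_assoc, inv_mul_cancel₀ Real.pi_ne_zero, one_mul]
  simpa using t2.add t3

theorem trunc_eq (f : ℝ → ℂ) (ε x : ℝ) :
    ∫ y in {y : ℝ | ε < |x - y|}, f y / ((x : ℂ) - (y : ℂ)) = ∫ y, f y * (tk ε (x - y) : ℂ) := by
  rw [← integral_indicator (measurableSet_lt measurable_const (by fun_prop))]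
  refine integral_congr_ae (ae_of_all _ fun y => ?_)
  unfold tk indicator
  simp only [mem_ofPred_eq]
  split_ifs
  · rw [div_eq_mul_inv]; push_cast; rfl
  · simp

theorem trunc_re_im {p : ℝ} (hp : 1 < p) {f : ℝ → ℂ} (hf : MemLp f (ENNReal.ofReal p) volume)
    {ε : ℝ} (hε : 0 < ε) (x : ℝ) :
    ∫ y in {y : ℝ | ε < |x - y|}, f y / ((x : ℂ) - (y : ℂ)) =
      (Tf (fun y => (f y).re) ε x : ℂ) + (Tf (fun y => (f y).im) ε x : ℂ) * Complex.I := by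
  have hpq := Real.HolderConjugate.conjExponent hp
  have i1 := integrable_mul_of_memLp hpq hf.re (memLp_tk hpq.symm.lt hε x)
  have i2 := integrable_mul_of_memLp hpq hf.im (memLp_tk hpq.symm.lt hε x)
  rw [trunc_eq, Tf, Tf, ← integral_complex_ofReal, ← integral_complex_ofReal, ← integral_mul_const,
    ← integral_add]
  · refine integral_congr_ae (ae_of_all _ fun y => ?_)
    simp only
    conv_lhs => rw [← Complex.re_add_im (f y)]
    push_cast; ring
  · exact i1.ofReal
  · exact i2.ofReal.mul_const _

/-- M. Riesz's theorem: for `f ∈ L^p` the principal value exists almost everywhere, and the Hilbert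
transform so defined is bounded on `L^p`. -/
theorem hilbert_complex {p : ℝ} (hp : 1 < p) : ∃ C : ENNReal, C ≠ ⊤ ∧ ∀ f : ℝ → ℂ, Measurable f →
    MemLp f (ENNReal.ofReal p) volume → ∃ h : ℝ → ℂ, Measurable h ∧
      eLpNorm h (ENNReal.ofReal p) volume ≤ C * eLpNorm f (ENNReal.ofReal p) volume ∧
      ∀ᵐ x : ℝ, Tendsto (fun ε : ℝ => ∫ y in {y : ℝ | ε < |x - y|}, f y / ((x : ℂ) - (y : ℂ)))
        (nhdsWithin 0 (Ioi 0)) (nhds (h x)) := by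
  obtain ⟨C, hC, hCb⟩ := hilbert_real hp
  refine ⟨C + C, by finiteness, fun f hfm hf => ?_⟩
  have hP1 : 1 ≤ ENNReal.ofReal p := by simpa using hp.le
  obtain ⟨u, hum, hub, hut⟩ := hCb (fun y => (f y).re) (by fun_prop) hf.re
  obtain ⟨v, hvm, hvb, hvt⟩ := hCb (fun y => (f y).im) (by fun_prop) hf.im
  refine ⟨fun x => (u x : ℂ) + (v x : ℂ) * Complex.I, by fun_prop, ?_, ?_⟩
  · have m1 : AEStronglyMeasurable (fun x => (u x : ℂ)) volume := by
      apply Measurable.aestronglyMeasurable; fun_prop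
    have m2 : AEStronglyMeasurable (fun x => (v x : ℂ) * Complex.I) volume := by
      apply Measurable.aestronglyMeasurable; fun_prop
    refine (eLpNorm_add_le m1 m2 hP1).trans ?_
    rw [add_mul]
    refine add_le_add ?_ ?_
    · calc _ = eLpNorm u (ENNReal.ofReal p) volume := eLpNorm_congr_norm_ae (ae_of_all _ fun x => by simp)
        _ ≤ _ := hub
        _ ≤ _ := by
          gcongr C * ?_
          exact eLpNorm_mono fun x => Complex.abs_re_le_norm _
    · calc _ = eLpNorm v (ENNReal.ofReal p) volume := eLpNorm_congr_norm_ae (ae_of_all _ fun x => by simp)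
        _ ≤ _ := hvb
        _ ≤ _ := by
          gcongr C * ?_
          exact eLpNorm_mono fun x => Complex.abs_im_le_norm _
  · filter_upwards [hut, hvt] with x h1 h2
    have h1' := (Complex.continuous_ofReal.tendsto _).comp h1
    have h2' := ((Complex.continuous_ofReal.tendsto _).comp h2).mul_const Complex.I
    refine (h1'.add h2').congr' ?_
    filter_upwards [self_mem_nhdsWithin] with ε hε
    exact (trunc_re_im hp hf hε x).symm

/-! ### Homogeneous kernels -/

theorem integrable_comp_abs' {f : ℝ → ℝ} (h : IntegrableOn f (Ioi 0)) : Integrable (fun x => f |x|) := by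
  have hf : IntegrableOn (fun x => f |x|) (Ioi 0) :=
    h.congr_fun (fun x hx => by simp only [abs_of_pos (show (0:ℝ) < x from hx)]) measurableSet_Ioi
  have int_Iic : IntegrableOn (fun x ↦ f |x|) (Iic 0) := by
    rw [← Measure.map_neg_eq_self (volume : Measure ℝ)]
    let m : MeasurableEmbedding fun x : ℝ => -x := (Homeomorph.neg ℝ).measurableEmbedding
    rw [m.integrableOn_map_iff]
    simp_rw [Function.comp_def, abs_neg, neg_preimage, neg_Iic, neg_zero]
    exact Iff.mpr integrableOn_Ici_iff_integrableOn_Ioi hf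
  rw [← integrableOn_univ, ← Iic_union_Ioi (a := (0 : ℝ))]
  exact int_Iic.union hf

/-- Powers are Lipschitz near `1`; this removes the singularity of `kw` at `u = 1`. -/
theorem rpow_lip (c : ℝ) : ∃ M, 0 ≤ M ∧ ∀ u ∈ Icc (1 / 2 : ℝ) 2, |u ^ c - 1| ≤ M * |1 - u| := by
  have hpos : ∀ u ∈ Icc (1 / 2 : ℝ) 2, u ≠ 0 := fun u hu => by have := hu.1; linarith
  have hc : ContinuousOn (fun u : ℝ => c * u ^ (c - 1)) (Icc (1 / 2) 2) := by
    refine ContinuousOn.mul continuousOn_const (ContinuousOn.rpow_const continuousOn_id ?_)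
    exact fun u hu => Or.inl (hpos u hu)
  obtain ⟨M, hM⟩ := isCompact_Icc.exists_bound_of_continuousOn hc
  refine ⟨M, (norm_nonneg _).trans (hM 1 (by norm_num)), fun u hu => ?_⟩
  have := (convex_Icc (1 / 2 : ℝ) 2).norm_image_sub_le_of_norm_hasDerivWithin_le
    (f := fun u : ℝ => u ^ c) (f' := fun u : ℝ => c * u ^ (c - 1)) (C := M) (x := 1) (y := u)
    (fun x hx => (Real.hasDerivAt_rpow_const (Or.inl (hpos x hx))).hasDerivWithinAt)
    hM (by norm_num) hu
  rw [abs_sub_comm 1 u]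
  simpa using this

/-- The homogeneous kernel comparing the weight `|x| ^ a` at two points, in multiplicative
coordinates. -/
noncomputable def kw (a u : ℝ) : ℝ := |(|u⁻¹| ^ a - 1)| * |1 - u|⁻¹

theorem measurable_kw (a : ℝ) : Measurable (kw a) := by unfold kw; fun_prop
theorem kw_nonneg (a u : ℝ) : 0 ≤ kw a u := by unfold kw; positivity

/-- Majorant of `kw a u * |u| ^ (-b)` as a function of `v = |u|`. -/
noncomputable def kdom (a b M v : ℝ) : ℝ :=
  (Iic (1 / 2 : ℝ)).indicator (fun v => 2 * (v ^ (-a + -b) + v ^ (-b))) v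
  + (Ioi (1 / 2 : ℝ)).indicator (fun v => 2 * (v ^ (-a + -b + -1) + v ^ (-b + -1))) v
  + (Iic (2 : ℝ)).indicator (fun _ => M * (1 / 2) ^ (-b)) v

theorem integrableOn_kdom {a b : ℝ} (M : ℝ) (hb0 : 0 < b) (hb1 : b < 1) (h0 : 0 < a + b) (h1 : a + b < 1) :
    IntegrableOn (kdom a b M) (Ioi 0) := by
  have e0 : ∀ c : ℝ, -1 < c → IntegrableOn (fun v : ℝ => v ^ c) (Ioc 0 (1 / 2)) := fun c hc =>
    (intervalIntegrable_iff_integrableOn_Ioc_of_le (by norm_num)).1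
      (intervalIntegral.intervalIntegrable_rpow' hc)
  have e1 : ∀ c : ℝ, c < -1 → IntegrableOn (fun v : ℝ => v ^ c) (Ioi (1 / 2)) := fun c hc =>
    integrableOn_Ioi_rpow_of_lt hc (by norm_num)
  refine (Integrable.add ?_ ?_).add ?_
  · rw [integrable_indicator_iff measurableSet_Iic, IntegrableOn, Measure.restrict_restrict measurableSet_Iic,
      inter_comm, Ioi_inter_Iic]
    exact ((e0 _ (by linarith)).add (e0 _ (by linarith))).const_mul 2
  · refine Integrable.mono_measure ?_ Measure.restrict_le_self
    rw [integrable_indicator_iff measurableSet_Ioi]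
    exact ((e1 _ (by linarith)).add (e1 _ (by linarith))).const_mul 2
  · rw [integrable_indicator_iff measurableSet_Iic, IntegrableOn, Measure.restrict_restrict measurableSet_Iic,
      inter_comm, Ioi_inter_Iic]
    exact integrableOn_const (by simp)

theorem kw_le_kdom {a b M : ℝ} (hb0 : 0 < b) (hM0 : 0 ≤ M)
    (hM : ∀ u ∈ Icc (1 / 2 : ℝ) 2, |u ^ (-a) - 1| ≤ M * |1 - u|) {u : ℝ} (hu : u ≠ 0) :
    kw a u * |u| ^ (-b) ≤ kdom a b M |u| := by
  have hv : 0 < |u| := abs_pos.2 hu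
  have e : |u⁻¹| ^ a = |u| ^ (-a) := by rw [abs_inv, Real.inv_rpow hv.le, Real.rpow_neg hv.le]
  have hk : |(|u| ^ (-a) - 1)| ≤ |u| ^ (-a) + 1 := by
    refine (abs_sub _ _).trans (le_of_eq ?_)
    rw [abs_one, abs_of_pos (Real.rpow_pos_of_pos hv _)]
  have pa := Real.rpow_pos_of_pos hv (-a)
  have pb := Real.rpow_pos_of_pos hv (-b)
  have pc : (0 : ℝ) < (1 / 2) ^ (-b) := by positivity
  unfold kw
  rw [e]
  have hlast : 0 ≤ (Iic (2 : ℝ)).indicator (fun _ => M * (1 / 2) ^ (-b)) |u| :=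
    indicator_nonneg (fun _ _ => by positivity) _
  unfold kdom
  by_cases h1 : |u| ≤ 1 / 2
  · have hd : |1 - u|⁻¹ ≤ 2 := by
      have : 1 / 2 ≤ |1 - u| := by
        have := le_abs_self (1 - u); have := le_abs_self u; linarith
      rw [show (2 : ℝ) = (1 / 2)⁻¹ by norm_num]
      gcongr
    rw [indicator_of_mem (show |u| ∈ Iic (1 / 2 : ℝ) from h1), Real.rpow_add hv]
    have hz : 0 ≤ (Ioi (1 / 2 : ℝ)).indicator (fun v : ℝ => 2 * (v ^ (-a + -b + -1) + v ^ (-b + -1))) |u| := by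
      rw [indicator_of_notMem]; simpa using h1
    have : |(|u| ^ (-a) - 1)| * |1 - u|⁻¹ * |u| ^ (-b) ≤ (|u| ^ (-a) + 1) * 2 * |u| ^ (-b) := by gcongr
    linarith
  · push Not at h1
    rw [indicator_of_notMem (show |u| ∉ Iic (1 / 2 : ℝ) by simpa using h1),
      indicator_of_mem (show |u| ∈ Ioi (1 / 2 : ℝ) from h1)]
    have hmid : 0 ≤ 2 * (|u| ^ (-a + -b + -1) + |u| ^ (-b + -1)) := by positivity
    by_cases h2 : 0 < u ∧ u ≤ 2
    · rw [abs_of_pos h2.1] at h1 hmid hv ⊢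
      rw [indicator_of_mem (show u ∈ Iic (2 : ℝ) from h2.2)]
      have hm := hM u ⟨h1.le, h2.2⟩
      have hx : |u ^ (-a) - 1| * |1 - u|⁻¹ ≤ M := by
        rcases eq_or_ne (|1 - u|) 0 with h0 | h0
        · rw [h0]; simpa using hM0
        · rw [← div_eq_mul_inv, div_le_iff₀ (lt_of_le_of_ne (abs_nonneg _) h0.symm)]; exact hm
      have hy : u ^ (-b) ≤ (1 / 2) ^ (-b) :=
        Real.rpow_le_rpow_of_nonpos (by norm_num) h1.le (by linarith)
      have : |u ^ (-a) - 1| * |1 - u|⁻¹ * u ^ (-b) ≤ M * (1 / 2) ^ (-b) := by gcongr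
      linarith
    · have hd : |1 - u|⁻¹ ≤ 2 * |u|⁻¹ := by
        have : |u| / 2 ≤ |1 - u| := by
          rcases lt_or_ge 0 u with h | h
          · have h3 : 2 < u := by by_contra hc; exact h2 ⟨h, not_lt.1 hc⟩
            rw [abs_of_pos h, abs_of_neg (by linarith)]; linarith
          · rw [abs_of_nonpos h, abs_of_nonneg (by linarith)]; linarith
        rw [show 2 * |u|⁻¹ = (|u| / 2)⁻¹ by rw [inv_div]; rfl]
        gcongr
      have : |(|u| ^ (-a) - 1)| * |1 - u|⁻¹ * |u| ^ (-b) ≤ (|u| ^ (-a) + 1) * (2 * |u|⁻¹) * |u| ^ (-b) := by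
        gcongr
      rw [Real.rpow_add hv, Real.rpow_add hv, Real.rpow_add hv, Real.rpow_neg_one]
      linarith

/-- Convergence at the origin and at infinity is what `0 < b < 1` and `0 < a + b < 1` express. -/
theorem lintegral_kw {a b : ℝ} (hb0 : 0 < b) (hb1 : b < 1) (h0 : 0 < a + b) (h1 : a + b < 1) :
    ∫⁻ u, ENNReal.ofReal (kw a u * |u| ^ (-b)) ≠ ⊤ := by
  obtain ⟨M, hM0, hM⟩ := rpow_lip (-a)
  have hi := integrable_comp_abs' (integrableOn_kdom M hb0 hb1 h0 h1)
  have h2 : ∫⁻ u : ℝ, ENNReal.ofReal (kdom a b M |u|) < ⊤ := by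
    refine lt_of_le_of_lt (lintegral_mono fun u => ?_) hi.2
    rw [← ofReal_abs_eq]
    exact ENNReal.ofReal_le_ofReal (le_abs_self _)
  refine ne_of_lt (lt_of_le_of_lt (lintegral_mono_ae ?_) h2)
  have : ∀ᵐ t : ℝ, t ≠ 0 := by simp [ae_iff]
  filter_upwards [this] with u hu
  exact ENNReal.ofReal_le_ofReal (kw_le_kdom hb0 hM0 hM hu)

theorem lintegral_scale {x : ℝ} (hx : x ≠ 0) (G : ℝ → ENNReal) (hG : Measurable G) :
    ∫⁻ y, G y = ENNReal.ofReal |x| * ∫⁻ u, G (x * u) := by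
  conv_lhs => rw [← Real.smul_map_volume_mul_left hx]
  rw [lintegral_smul_measure, lintegral_map hG (measurable_const_mul x)]
  rfl

/-- The kernel `||x/y| ^ a - 1| / |x - y|`. -/
noncomputable def Kw (a x y : ℝ) : ℝ := |(|x / y| ^ a - 1)| * |x - y|⁻¹

theorem Kw_nonneg (a x y : ℝ) : 0 ≤ Kw a x y := by unfold Kw; positivity

theorem Kw_scale (a : ℝ) {x : ℝ} (hx : x ≠ 0) (u : ℝ) : |x| * Kw a x (x * u) = kw a u := by
  have hv : |x| ≠ 0 := abs_ne_zero.2 hx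
  unfold Kw kw
  rw [show x / (x * u) = u⁻¹ by rw [← div_div, div_self hx, one_div],
    show x - x * u = x * (1 - u) by ring, abs_mul, mul_inv]
  field_simp

theorem measurable_Kw (a : ℝ) : Measurable (fun z : ℝ × ℝ => Kw a z.1 z.2) := by unfold Kw; fun_prop

theorem measurable_Kw_right (a x : ℝ) : Measurable (Kw a x) := by unfold Kw; fun_prop

/-- The substitution `y = x u`, with an auxiliary factor `|u| ^ b` split off from the kernel. -/
theorem lintegral_Kw_eq (a b : ℝ) {x : ℝ} (hx : x ≠ 0) (G : ℝ → ENNReal) (hG : Measurable G) :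
    ∫⁻ y, ENNReal.ofReal (Kw a x y) * G y =
      ∫⁻ u, ENNReal.ofReal (kw a u * |u| ^ (-b)) * (ENNReal.ofReal (|u| ^ b) * G (x * u)) := by
  have hne : ∀ᵐ t : ℝ, t ≠ 0 := by simp [ae_iff]
  have hmk : Measurable (fun y => ENNReal.ofReal (Kw a x y) * G y) := by
    exact (measurable_Kw_right a x).ennreal_ofReal.mul hG
  rw [lintegral_scale hx _ hmk, ← lintegral_const_mul' _ _ ENNReal.ofReal_ne_top]
  refine lintegral_congr_ae ?_
  filter_upwards [hne] with u hu
  have hv : 0 < |u| := abs_pos.2 hu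
  rw [← mul_assoc, ← mul_assoc, ← ENNReal.ofReal_mul (abs_nonneg _), Kw_scale a hx,
    ← ENNReal.ofReal_mul (mul_nonneg (kw_nonneg a u) (Real.rpow_nonneg hv.le _)), mul_assoc,
    ← Real.rpow_add hv, neg_add_cancel, Real.rpow_zero, mul_one]

/-- The positive operator with kernel `Kw a` is bounded on `L^p`: the kernel is homogeneous of
degree `-1`, so this is a multiplicative convolution and Minkowski's inequality applies. -/
theorem Kw_bound {p a : ℝ} (hp : 1 < p) (h0 : -1 / p < a) (h1 : a < 1 - 1 / p) :
    ∃ C : ENNReal, C ≠ ⊤ ∧ ∀ G : ℝ → ENNReal, Measurable G →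
      ∫⁻ x, (∫⁻ y, ENNReal.ofReal (Kw a x y) * G y) ^ p ≤ C * ∫⁻ y, G y ^ p := by
  have hp0 : 0 < p := by linarith
  have hb0 : 0 < 1 / p := by positivity
  have hb1 : 1 / p < 1 := by rw [div_lt_one hp0]; exact hp
  have h0' : 0 < a + 1 / p := by rw [neg_div] at h0; linarith
  obtain ⟨k, hk⟩ : ∃ k : ℝ → ENNReal, k = fun u => ENNReal.ofReal (kw a u * |u| ^ (-(1 / p))) := ⟨_, rfl⟩
  have hkm : Measurable k := by
    rw [hk]
    exact ((measurable_kw a).mul (measurable_norm.pow_const _)).ennreal_ofReal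
  have hκt : ∫⁻ u, k u ≠ ⊤ := by rw [hk]; exact lintegral_kw hb0 hb1 h0' (by linarith)
  -- the factor `|u| ^ (1 / p)` compensates the Jacobian of `x ↦ x u` in the `L^p` norm
  refine ⟨(∫⁻ u, k u) ^ (p - 1) * ∫⁻ u, k u,
    ENNReal.mul_ne_top (ENNReal.rpow_ne_top_of_nonneg (by linarith) hκt) hκt, fun G hG => ?_⟩
  have hne : ∀ᵐ t : ℝ, t ≠ 0 := by simp [ae_iff]
  have e1 : ∀ᵐ x : ℝ, (∫⁻ y, ENNReal.ofReal (Kw a x y) * G y) ^ p =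
      (∫⁻ u, k u * (ENNReal.ofReal (|u| ^ (1 / p)) * G (x * u))) ^ p := by
    filter_upwards [hne] with x hx
    rw [lintegral_Kw_eq a (1 / p) hx G hG, hk]
  rw [lintegral_congr_ae e1]
  refine (lintegral_mink hp k hkm (fun x u => ENNReal.ofReal (|u| ^ (1 / p)) * G (x * u)) ?_).trans ?_
  · exact ((measurable_snd.norm.pow_const _).ennreal_ofReal).mul
      (hG.comp (measurable_fst.mul measurable_snd))
  rw [mul_assoc, ← lintegral_mul_const _ hkm]
  gcongr (∫⁻ u, k u) ^ (p - 1) * ?_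
  refine lintegral_mono_ae ?_
  filter_upwards [hne] with u hu
  gcongr k u * ?_
  have hv : 0 < |u| := abs_pos.2 hu
  have hGp : Measurable (fun y => G y ^ p) := hG.pow_const p
  rw [lintegral_scale hu _ hGp, ← lintegral_const_mul' _ _ ENNReal.ofReal_ne_top]
  refine lintegral_mono fun x => le_of_eq ?_
  rw [ENNReal.mul_rpow_of_nonneg _ _ hp0.le, ENNReal.ofReal_rpow_of_nonneg (by positivity) hp0.le,
    ← Real.rpow_mul hv.le, one_div, inv_mul_cancel₀ hp0.ne', Real.rpow_one, mul_comm x u]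

/-! ### Power weights and the commutator kernel -/

/-- The two-parameter power weight, of order `a` at the origin and of order `b` at infinity. -/
noncomputable def wt (a b x : ℝ) : ℝ := |x| ^ a * (1 + |x|) ^ (b - a)

theorem measurable_wt (a b : ℝ) : Measurable (wt a b) := by unfold wt; fun_prop

theorem wt_nonneg (a b x : ℝ) : 0 ≤ wt a b x := by unfold wt; positivity

theorem wt_pos (a b : ℝ) {x : ℝ} (hx : x ≠ 0) : 0 < wt a b x := by
  have : 0 < |x| := abs_pos.2 hx
  unfold wt; positivity

/-- In `wt a b x = (|x| / (1 + |x|)) ^ a * (1 + |x|) ^ b` the first base is at most `1` and the second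
at least `1`, which gives the monotonicity in the exponents. -/
theorem wt_le {a b a' b' x : ℝ} (ha : a' ≤ a) (hb : b ≤ b') (hx : x ≠ 0) :
    wt a b x ≤ wt a' b' x := by
  have hv : 0 < |x| := abs_pos.2 hx
  have h1 : 0 < 1 + |x| := by linarith
  have key : ∀ c d : ℝ, wt c d x = (|x| / (1 + |x|)) ^ c * (1 + |x|) ^ d := fun c d => by
    unfold wt
    rw [Real.div_rpow hv.le h1.le, Real.rpow_sub h1]
    field_simp
  rw [key, key]
  have h2 : |x| / (1 + |x|) ≤ 1 := by rw [div_le_one h1]; linarith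
  have h3 : 0 < |x| / (1 + |x|) := by positivity
  exact mul_le_mul (Real.rpow_le_rpow_of_exponent_ge h3 h2 ha)
    (Real.rpow_le_rpow_of_exponent_le (by linarith) hb) (by positivity) (by positivity)

theorem rpow_between {l m c : ℝ} (hl : 0 < l) (hm : m ∈ uIcc 1 l) :
    m ^ c ∈ uIcc 1 (l ^ c) := by
  rw [mem_uIcc] at hm ⊢
  rcases hm with ⟨h1, h2⟩ | ⟨h1, h2⟩
  · rcases le_total 0 c with hc | hc
    · exact Or.inl ⟨Real.one_le_rpow h1 hc, Real.rpow_le_rpow (by linarith) h2 hc⟩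
    · exact Or.inr ⟨Real.rpow_le_rpow_of_nonpos (by linarith) h2 hc,
        Real.rpow_le_one_of_one_le_of_nonpos h1 hc⟩
  · rcases le_total 0 c with hc | hc
    · exact Or.inr ⟨Real.rpow_le_rpow hl.le h1 hc, Real.rpow_le_one (by linarith) h2 hc⟩
    · exact Or.inl ⟨Real.one_le_rpow_of_pos_of_le_one_of_nonpos (by linarith) h2 hc,
        Real.rpow_le_rpow_of_nonpos hl h1 hc⟩

/-- With `l = |x / y|`, the ratio `wt a b x / wt a b y` lies between `l ^ a` and `l ^ b`. -/
theorem wt_ratio (a b : ℝ) {x y : ℝ} (hx : x ≠ 0) (hy : y ≠ 0) :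
    |1 - wt a b x / wt a b y| ≤ |(|x / y| ^ a - 1)| + |(|x / y| ^ b - 1)| := by
  have hv : 0 < |x| := abs_pos.2 hx
  have hw : 0 < |y| := abs_pos.2 hy
  have h1 : 0 < 1 + |x| := by linarith
  have h2 : 0 < 1 + |y| := by linarith
  have hl : 0 < |x / y| := by rw [abs_div]; positivity
  have hm : (1 + |x|) / (1 + |y|) ∈ uIcc 1 |x / y| := by
    rw [mem_uIcc, abs_div, le_div_iff₀ h2, div_le_div_iff₀ h2 hw, div_le_div_iff₀ hw h2,
      div_le_iff₀ h2]
    rcases le_total |x| |y| with h | h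
    · right; constructor <;> nlinarith
    · left; constructor <;> nlinarith
  have hb := rpow_between (c := b - a) hl hm
  have e : wt a b x / wt a b y = |x / y| ^ a * ((1 + |x|) / (1 + |y|)) ^ (b - a) := by
    unfold wt
    rw [abs_div, Real.div_rpow hv.le hw.le, Real.div_rpow h1.le h2.le, div_mul_div_comm]
  have e2 : |x / y| ^ b = |x / y| ^ a * |x / y| ^ (b - a) := by
    rw [← Real.rpow_add hl]; congr 1; ring
  rw [e, e2]
  obtain ⟨A, hA⟩ : ∃ A, A = |x / y| ^ a := ⟨_, rfl⟩
  have hA0 : 0 < A := by rw [hA]; positivity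
  rw [← hA]
  obtain ⟨L, hL⟩ : ∃ L, L = |x / y| ^ (b - a) := ⟨_, rfl⟩
  obtain ⟨M, hM⟩ : ∃ M, M = ((1 + |x|) / (1 + |y|)) ^ (b - a) := ⟨_, rfl⟩
  rw [← hL, ← hM] at hb
  rw [← hL, ← hM]
  have g1 := le_abs_self (A - 1)
  have g2 := neg_abs_le (A - 1)
  have g3 := le_abs_self (A * L - 1)
  have g4 := neg_abs_le (A * L - 1)
  have g5 := abs_nonneg (A - 1)
  have g6 := abs_nonneg (A * L - 1)
  rw [abs_le]
  rcases mem_uIcc.1 hb with ⟨q1, q2⟩ | ⟨q1, q2⟩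
  · have := mul_le_mul_of_nonneg_left q1 hA0.le
    have := mul_le_mul_of_nonneg_left q2 hA0.le
    constructor <;> linarith
  · have := mul_le_mul_of_nonneg_left q1 hA0.le
    have := mul_le_mul_of_nonneg_left q2 hA0.le
    constructor <;> linarith

/-- The kernel of the commutator of the Hilbert transform with the weight, normalised by the
weight. -/
noncomputable def Dk (a b x y : ℝ) : ℝ := (1 - wt a b x / wt a b y) * (x - y)⁻¹

theorem measurable_Dk (a b : ℝ) : Measurable (fun z : ℝ × ℝ => Dk a b z.1 z.2) := by
  unfold Dk wt; fun_prop

theorem measurable_Dk_right (a b x : ℝ) : Measurable (Dk a b x) := by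
  unfold Dk wt; fun_prop

theorem Dk_le (a b : ℝ) {x y : ℝ} (hx : x ≠ 0) (hy : y ≠ 0) :
    |Dk a b x y| ≤ Kw a x y + Kw b x y := by
  unfold Dk Kw
  rw [abs_mul, abs_inv, ← add_mul]
  exact mul_le_mul_of_nonneg_right (wt_ratio a b hx hy) (by positivity)

theorem enorm_Dk_le (a b : ℝ) {x y : ℝ} (hx : x ≠ 0) (hy : y ≠ 0) :
    ‖Dk a b x y‖ₑ ≤ ENNReal.ofReal (Kw a x y) + ENNReal.ofReal (Kw b x y) := by
  rw [← ENNReal.ofReal_add (Kw_nonneg _ _ _) (Kw_nonneg _ _ _), ← ofReal_abs_eq]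
  exact ENNReal.ofReal_le_ofReal (Dk_le a b hx hy)

/-- The `L^p` bound for the commutator term, and its absolute convergence almost everywhere. -/
theorem Dk_bound {p a b : ℝ} (hp : 1 < p) (ha0 : -1 / p < a) (ha1 : a < 1 - 1 / p)
    (hb0 : -1 / p < b) (hb1 : b < 1 - 1 / p) :
    ∃ C : ENNReal, C ≠ ⊤ ∧ ∀ g : ℝ → ℂ, Measurable g →
      ∫⁻ x, (∫⁻ y, ‖g y * (Dk a b x y : ℂ)‖ₑ) ^ p ≤ C * ∫⁻ y, ‖g y‖ₑ ^ p := by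
  obtain ⟨Ca, hCa, hA⟩ := Kw_bound hp ha0 ha1
  obtain ⟨Cb, hCb, hB⟩ := Kw_bound hp hb0 hb1
  have hp0 : 0 < p := by linarith
  have hne : ∀ᵐ t : ℝ, t ≠ 0 := by simp [ae_iff]
  refine ⟨2 ^ (p - 1) * (Ca + Cb), by finiteness, fun g hg => ?_⟩
  have hG : Measurable fun y => ‖g y‖ₑ := hg.enorm
  have hmeas : ∀ c, Measurable fun x => ∫⁻ y, ENNReal.ofReal (Kw c x y) * ‖g y‖ₑ := fun c =>
    Measurable.lintegral_prod_right
      ((measurable_Kw c).ennreal_ofReal.mul (hG.comp measurable_snd))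
  calc ∫⁻ x, (∫⁻ y, ‖g y * (Dk a b x y : ℂ)‖ₑ) ^ p
      ≤ ∫⁻ x, 2 ^ (p - 1) * ((∫⁻ y, ENNReal.ofReal (Kw a x y) * ‖g y‖ₑ) ^ p +
          (∫⁻ y, ENNReal.ofReal (Kw b x y) * ‖g y‖ₑ) ^ p) := by
        refine lintegral_mono_ae ?_
        filter_upwards [hne] with x hx
        refine le_trans ?_ (ENNReal.rpow_add_le_mul_rpow_add_rpow _ _ hp.le)
        gcongr
        have hm : Measurable fun y => ENNReal.ofReal (Kw a x y) * ‖g y‖ₑ :=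
          (measurable_Kw_right a x).ennreal_ofReal.mul hG
        rw [← lintegral_add_left hm]
        refine lintegral_mono_ae ?_
        filter_upwards [hne] with y hy
        rw [← add_mul, enorm_mul, mul_comm]
        gcongr
        refine le_trans (le_of_eq ?_) (enorm_Dk_le a b hx hy)
        rw [← ofReal_norm, ← ofReal_norm, Complex.norm_real]
    _ = 2 ^ (p - 1) * ((∫⁻ x, (∫⁻ y, ENNReal.ofReal (Kw a x y) * ‖g y‖ₑ) ^ p) +
          ∫⁻ x, (∫⁻ y, ENNReal.ofReal (Kw b x y) * ‖g y‖ₑ) ^ p) := by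
        rw [lintegral_const_mul' _ _ (by finiteness), lintegral_add_left ((hmeas a).pow_const p)]
    _ ≤ 2 ^ (p - 1) * (Ca * (∫⁻ y, ‖g y‖ₑ ^ p) + Cb * ∫⁻ y, ‖g y‖ₑ ^ p) := by
        gcongr
        · exact hA _ hG
        · exact hB _ hG
    _ = _ := by ring

/-! ### The weighted inequality in the Muckenhoupt range -/

/-- The commutator identity behind the weighted estimate, for the truncated kernel. -/
theorem tk_identity (a b ε : ℝ) (f : ℝ → ℂ) {x y : ℝ} (hx : x ≠ 0) (hy : y ≠ 0) :
    f y * (tk ε (x - y) : ℂ) =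
      (f y * (wt a b y : ℂ) * (tk ε (x - y) : ℂ) -
        {y : ℝ | ε < |x - y|}.indicator (fun y => f y * (wt a b y : ℂ) * (Dk a b x y : ℂ)) y) *
        (wt a b x : ℂ)⁻¹ := by
  have h1 : (wt a b x : ℂ) ≠ 0 := Complex.ofReal_ne_zero.2 (wt_pos a b hx).ne'
  have h2 : (wt a b y : ℂ) ≠ 0 := Complex.ofReal_ne_zero.2 (wt_pos a b hy).ne'
  unfold tk
  by_cases h : ε < |x - y|
  · rw [indicator_of_mem (show x - y ∈ {s : ℝ | ε < |s|} from h), indicator_of_mem (by exact h)]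
    unfold Dk
    push_cast
    field_simp
    ring
  · rw [indicator_of_notMem (show x - y ∉ {s : ℝ | ε < |s|} from h), indicator_of_notMem (by exact h)]
    simp

/-- The one-weight inequality. With `w = wt a b` and `g = f w`, a function in `L^p`, the identity
`w · H f = H g - ∫ D(·, y) g(y) dy` reduces it to the unweighted theorem and to the bound for the
commutator kernel `D = Dk a b`. -/
theorem weighted {p a b : ℝ} (hp : 1 < p) (ha0 : -1 / p < a) (ha1 : a < 1 - 1 / p)
    (hb0 : -1 / p < b) (hb1 : b < 1 - 1 / p) :
    ∃ C : ENNReal, C ≠ ⊤ ∧ ∀ f : ℝ → ℂ, Measurable f →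
      ∫⁻ y, (‖f y‖ₑ * ENNReal.ofReal (wt a b y)) ^ p < ⊤ →
      ∃ H : ℝ → ℂ, Measurable H ∧
        (∀ᵐ x ∂(volume : Measure ℝ),
          Tendsto (fun ε : ℝ => ∫ y in {y : ℝ | ε < |x - y|}, f y / ((x : ℂ) - (y : ℂ)))
            (nhdsWithin 0 (Set.Ioi 0)) (nhds (H x))) ∧
        ∫⁻ x, (‖H x‖ₑ * ENNReal.ofReal (wt a b x)) ^ p ≤
          C * ∫⁻ y, (‖f y‖ₑ * ENNReal.ofReal (wt a b y)) ^ p := by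
  obtain ⟨C1, hC1, hH⟩ := hilbert_complex hp
  obtain ⟨C2, hC2, hD⟩ := Dk_bound hp ha0 ha1 hb0 hb1
  have hp0 : 0 < p := by linarith
  have hpq := Real.HolderConjugate.conjExponent hp
  have hne : ∀ᵐ t : ℝ, t ≠ 0 := by simp [ae_iff]
  refine ⟨2 ^ (p - 1) * (C1 ^ p + C2), by finiteness, fun f hf hfin => ?_⟩
  obtain ⟨g, hgdef⟩ : ∃ g : ℝ → ℂ, g = fun y => f y * (wt a b y : ℂ) := ⟨_, rfl⟩
  have hgm : Measurable g := by
    rw [hgdef]; exact hf.mul (Complex.measurable_ofReal.comp (measurable_wt a b))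
  have hen : ∀ x, ‖(wt a b x : ℂ)‖ₑ = ENNReal.ofReal (wt a b x) := fun x => by
    rw [← ofReal_norm, Complex.norm_real, Real.norm_of_nonneg (wt_nonneg a b x)]
  have hge : ∀ y, ‖g y‖ₑ = ‖f y‖ₑ * ENNReal.ofReal (wt a b y) := fun y => by
    rw [hgdef]; simp only [enorm_mul, hen]
  simp_rw [← hge] at hfin ⊢
  have hgL : MemLp g (ENNReal.ofReal p) volume :=
    memLp_of_lintegral hp0 hgm.aestronglyMeasurable hfin
  obtain ⟨h, hhm, hhn, hht⟩ := hH g hgm hgL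
  have hh : ∫⁻ x, ‖h x‖ₑ ^ p ≤ C1 ^ p * ∫⁻ y, ‖g y‖ₑ ^ p := by
    rw [lintegral_eq_eLpNorm hp0, lintegral_eq_eLpNorm hp0, ← ENNReal.mul_rpow_of_nonneg _ _ hp0.le]
    gcongr
  have hDm : Measurable fun z : ℝ × ℝ => g z.2 * (Dk a b z.1 z.2 : ℂ) :=
    (hgm.comp measurable_snd).mul (Complex.measurable_ofReal.comp (measurable_Dk a b))
  obtain ⟨T, hT⟩ : ∃ T : ℝ → ENNReal, T = fun x => ∫⁻ y, ‖g y * (Dk a b x y : ℂ)‖ₑ := ⟨_, rfl⟩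
  have hTm : Measurable T := by rw [hT]; exact Measurable.lintegral_prod_right hDm.enorm
  have hTn : ∫⁻ x, T x ^ p ≤ C2 * ∫⁻ y, ‖g y‖ₑ ^ p := by rw [hT]; exact hD g hgm
  have hTfin : ∀ᵐ x, T x < ⊤ := by
    have : ∫⁻ x, T x ^ p ≠ ⊤ := (lt_of_le_of_lt hTn (ENNReal.mul_lt_top hC2.lt_top hfin)).ne
    filter_upwards [ae_lt_top (hTm.pow_const p) this] with x hx
    exact (ENNReal.rpow_lt_top_iff_of_pos hp0).1 hx
  have hIm : Measurable fun x => ∫ y, g y * (Dk a b x y : ℂ) :=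
    (StronglyMeasurable.integral_prod_right (f := fun x y => g y * (Dk a b x y : ℂ))
      hDm.stronglyMeasurable).measurable
  refine ⟨fun x => (h x - ∫ y, g y * (Dk a b x y : ℂ)) * (wt a b x : ℂ)⁻¹,
    (hhm.sub hIm).mul (Complex.measurable_ofReal.comp (measurable_wt a b)).inv, ?_, ?_⟩
  · filter_upwards [hne, hTfin, hht] with x hx hTx hxt
    have hDi : Integrable (fun y => g y * (Dk a b x y : ℂ)) := by
      refine ⟨(hDm.comp measurable_prodMk_left).aestronglyMeasurable, ?_⟩
      rw [hT] at hTx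
      exact hTx
    have hms : ∀ ε : ℝ, MeasurableSet {y : ℝ | ε < |x - y|} := fun ε =>
      measurableSet_lt measurable_const (measurable_const.sub measurable_id).norm
    have hlim : Tendsto (fun ε : ℝ => ∫ y, {y : ℝ | ε < |x - y|}.indicator
        (fun y => g y * (Dk a b x y : ℂ)) y) (nhdsWithin 0 (Ioi 0))
        (nhds (∫ y, g y * (Dk a b x y : ℂ))) := by
      refine tendsto_integral_filter_of_dominated_convergence
        (fun y => ‖g y * (Dk a b x y : ℂ)‖) ?_ ?_ hDi.norm ?_
      · exact Eventually.of_forall fun ε => hDi.aestronglyMeasurable.indicator (hms ε)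
      · exact Eventually.of_forall fun ε => Eventually.of_forall fun y =>
          norm_indicator_le_norm_self _ _
      · have hxy : ∀ᵐ y : ℝ, y ≠ x := by simp [ae_iff]
        filter_upwards [hxy] with y hy
        have hpos : 0 < |x - y| := abs_pos.2 (sub_ne_zero.2 hy.symm)
        refine tendsto_const_nhds.congr' ?_
        filter_upwards [nhdsWithin_le_nhds (Iio_mem_nhds hpos)] with ε hε
        rw [indicator_of_mem (show y ∈ {y : ℝ | ε < |x - y|} from hε)]
    refine ((hxt.sub hlim).mul_const ((wt a b x : ℂ)⁻¹)).congr' ?_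
    filter_upwards [self_mem_nhdsWithin] with ε hε
    have hgi : Integrable (fun y => g y * (tk ε (x - y) : ℂ)) := by
      have h1 := integrable_mul_of_memLp hpq hgL.norm (memLp_tk hpq.symm.lt hε x)
      refine h1.mono (hgm.mul (Complex.measurable_ofReal.comp ((measurable_tk ε).comp
        (measurable_const.sub measurable_id)))).aestronglyMeasurable (Eventually.of_forall fun y => ?_)
      rw [norm_mul, norm_mul, norm_norm, Complex.norm_real]
    have hii : Integrable (fun y => {y : ℝ | ε < |x - y|}.indicator
        (fun y => g y * (Dk a b x y : ℂ)) y) := hDi.indicator (hms ε)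
    rw [trunc_eq, trunc_eq, ← integral_sub hgi hii, ← integral_mul_const]
    refine integral_congr_ae ?_
    filter_upwards [hne] with y hy
    rw [tk_identity a b ε f hx hy, hgdef]
  · calc _ ≤ ∫⁻ x, 2 ^ (p - 1) * (‖h x‖ₑ ^ p + T x ^ p) := by
          refine lintegral_mono_ae ?_
          filter_upwards [hne] with x hx
          have hw : (wt a b x : ℂ) ≠ 0 := Complex.ofReal_ne_zero.2 (wt_pos a b hx).ne'
          refine le_trans ?_ (ENNReal.rpow_add_le_mul_rpow_add_rpow _ _ hp.le)
          gcongr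
          rw [← hen, ← enorm_mul, mul_assoc, inv_mul_cancel₀ hw, mul_one]
          refine (enorm_sub_le).trans ?_
          gcongr
          rw [hT]
          exact enorm_integral_le_lintegral_enorm _
      _ = 2 ^ (p - 1) * ((∫⁻ x, ‖h x‖ₑ ^ p) + ∫⁻ x, T x ^ p) := by
          rw [lintegral_const_mul' _ _ (by finiteness), lintegral_add_left (hhm.enorm.pow_const p)]
      _ ≤ 2 ^ (p - 1) * (C1 ^ p * (∫⁻ y, ‖g y‖ₑ ^ p) + C2 * ∫⁻ y, ‖g y‖ₑ ^ p) := by gcongr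
      _ = _ := by ring

/-! ### The general exponents -/

theorem ofReal_weighted {p : ℝ} (hp : 0 < p) (a b : ℝ) (f : ℝ → ℂ) (y : ℝ) :
    ENNReal.ofReal ((‖f y‖ * |y| ^ a * (1 + |y|) ^ (b - a)) ^ p) =
      (‖f y‖ₑ * ENNReal.ofReal (wt a b y)) ^ p := by
  rw [mul_assoc, ← ofReal_norm, ← ENNReal.ofReal_mul (norm_nonneg _),
    ENNReal.ofReal_rpow_of_nonneg (mul_nonneg (norm_nonneg _) (wt_nonneg _ _ _)) hp.le]
  rfl

end HilbertW

theorem stmt3 (p r s R S : ℝ) (hp : 1 < p)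
    (hr : -1 / p < r) (hs : s < 1 - 1 / p) (hR : R < 1 - 1 / p) (hS : -1 / p < S)
    (hrR : R ≤ r) (hsS : s ≤ S) :
    ∃ C > (0 : ℝ), ∀ f : ℝ → ℂ, Measurable f →
      Integrable (fun y : ℝ => (‖f y‖ * |y| ^ R * (1 + |y|) ^ (S - R)) ^ p) →
      ∃ H : ℝ → ℂ, Measurable H ∧
        (∀ᵐ x ∂(volume : Measure ℝ),
          Tendsto (fun ε : ℝ => ∫ y in {y : ℝ | ε < |x - y|}, f y / ((x : ℂ) - (y : ℂ)))
            (nhdsWithin 0 (Set.Ioi 0)) (nhds (H x))) ∧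
        ∫ x : ℝ, (‖H x‖ * |x| ^ r * (1 + |x|) ^ (s - r)) ^ p ≤
          C * ∫ y : ℝ, (‖f y‖ * |y| ^ R * (1 + |y|) ^ (S - R)) ^ p := by
  have hp0 : 0 < p := by linarith
  have hi0 : -1 / p < 0 := by rw [neg_div]; have : 0 < 1 / p := by positivity
                              linarith
  have hi1 : 0 < 1 - 1 / p := by rw [sub_pos, div_lt_one hp0]; exact hp
  have hne : ∀ᵐ t : ℝ, t ≠ 0 := by simp [ae_iff]
  -- Intermediate exponents in the Muckenhoupt range, `R ≤ a ≤ r` and `s ≤ b ≤ S`.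
  obtain ⟨a, ha0, ha1, hRa, har⟩ : ∃ a, -1 / p < a ∧ a < 1 - 1 / p ∧ R ≤ a ∧ a ≤ r :=
    ⟨max R (min r 0), lt_of_lt_of_le (lt_min hr hi0) (le_max_right _ _),
      max_lt hR ((min_le_right _ _).trans_lt hi1), le_max_left _ _, max_le hrR (min_le_left _ _)⟩
  obtain ⟨b, hb0, hb1, hsb, hbS⟩ : ∃ b, -1 / p < b ∧ b < 1 - 1 / p ∧ s ≤ b ∧ b ≤ S :=
    ⟨max s (min S 0), lt_of_lt_of_le (lt_min hS hi0) (le_max_right _ _),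
      max_lt hs ((min_le_right _ _).trans_lt hi1), le_max_left _ _, max_le hsS (min_le_left _ _)⟩
  obtain ⟨C, hC, hW⟩ := HilbertW.weighted hp ha0 ha1 hb0 hb1
  refine ⟨C.toReal + 1, by positivity, fun f hf hInt => ?_⟩
  have hnn : ∀ (c d : ℝ) (F : ℝ → ℂ) (y : ℝ), 0 ≤ (‖F y‖ * |y| ^ c * (1 + |y|) ^ (d - c)) ^ p :=
    fun c d F y => by positivity
  have hRS : ∫⁻ y, (‖f y‖ₑ * ENNReal.ofReal (HilbertW.wt R S y)) ^ p =
      ENNReal.ofReal (∫ y : ℝ, (‖f y‖ * |y| ^ R * (1 + |y|) ^ (S - R)) ^ p) := by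
    rw [ofReal_integral_eq_lintegral_ofReal hInt (Eventually.of_forall (hnn R S f))]
    exact lintegral_congr fun y => (HilbertW.ofReal_weighted hp0 R S f y).symm
  have hmono : ∫⁻ y, (‖f y‖ₑ * ENNReal.ofReal (HilbertW.wt a b y)) ^ p ≤
      ∫⁻ y, (‖f y‖ₑ * ENNReal.ofReal (HilbertW.wt R S y)) ^ p := by
    refine lintegral_mono_ae ?_
    filter_upwards [hne] with y hy
    gcongr
    exact HilbertW.wt_le hRa hbS hy
  obtain ⟨H, hHm, hHt, hHb⟩ := hW f hf (hmono.trans_lt (hRS ▸ ENNReal.ofReal_lt_top))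
  refine ⟨H, hHm, hHt, ?_⟩
  obtain ⟨I, hI⟩ : ∃ I : ℝ, I = ∫ y : ℝ, (‖f y‖ * |y| ^ R * (1 + |y|) ^ (S - R)) ^ p := ⟨_, rfl⟩
  have hI0 : 0 ≤ I := by rw [hI]; exact integral_nonneg (hnn R S f)
  rw [← hI] at hRS ⊢
  have hrs : ∫⁻ x, ENNReal.ofReal ((‖H x‖ * |x| ^ r * (1 + |x|) ^ (s - r)) ^ p) ≤
      C * ENNReal.ofReal I := by
    rw [← hRS]
    refine le_trans (lintegral_mono_ae ?_) (hHb.trans (mul_le_mul_right hmono C))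
    filter_upwards [hne] with x hx
    rw [HilbertW.ofReal_weighted hp0]
    gcongr
    exact HilbertW.wt_le har hsb hx
  have hm : Measurable fun x => (‖H x‖ * |x| ^ r * (1 + |x|) ^ (s - r)) ^ p := by fun_prop
  rw [integral_eq_lintegral_of_nonneg_ae (Eventually.of_forall (hnn r s H)) hm.aestronglyMeasurable]
  refine (ENNReal.toReal_mono (by finiteness) hrs).trans ?_
  rw [ENNReal.toReal_mul, ENNReal.toReal_ofReal hI0]
  nlinarith
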